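/- arXiv:math/0701488 — 7 statements merged into one kernel-verified Lean document; each statement's English description precedes it below -/
import Mathlib

section
/- If a t-Mcycle of [n] exists, then n divides the binomial coefficient C(n+t−1, t). -/
/-- A `t`-Mcycle of `[n]`: a cyclic sequence of length `m = C(n+t-1, t)` of elements of
`[n]` (modeled as `Fin n`) such that every multiset of size `t` over `[n]` appears
exactly once among the `m` cyclic windows of length `t`. -/
def IsMcycle (n t : ℕ) (a : ZMod ((n + t - 1).choose t) → Fin n) : Prop :=
  ∀ s : Multiset (Fin n), Multiset.card s = t →
    ∃! i : ZMod ((n + t - 1).choose t),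
      (Multiset.range t).map (fun j => a (i + (j : ZMod ((n + t - 1).choose t)))) = s

/-!
Write `m = C(n + t - 1, t)` for the length of the cycle, and count the occurrences of a symbol `x`
in all windows together. Each position of the cycle lies in `t` windows, so the count is `t` times
the number of positions that carry `x`. On the other hand the windows run through all `t`-multisets
once each, and a permutation of the alphabet permutes these multisets, so the count is the same for
every symbol. Hence every symbol occurs equally often, and `n` divides `m`.

The same count works when the intervals of a cyclic group are replaced by the translates of any
nonempty multiset in any group.
-/

variable {G α : Type*}

/-- The window of `a : G → α` at position `i`: the multiset of values that `a` takes on the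
translate `i + D`. For `G = ZMod m` and `D = {0, …, t - 1}` it is the cyclic window of length `t`
starting at `i`. -/
def window [Add G] (D : Multiset G) (a : G → α) (i : G) : Multiset α :=
  D.map fun d => a (i + d)

/-- The analogue of a `t`-Mcycle for the window shape `D`: each multiset of the size of `D`
is the window of `a` at exactly one position. -/
def IsWindowUniversal [Add G] (D : Multiset G) (a : G → α) : Prop :=
  ∀ s : Multiset α, s.card = D.card → ∃! i, window D a i = s

theorem card_window [Add G] (D : Multiset G) (a : G → α) (i : G) :
    (window D a i).card = D.card :=
  Multiset.card_map _ _

theorem sum_count_window [AddGroup G] [Fintype G] [DecidableEq α] (D : Multiset G) (a : G → α)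
    (x : α) : ∑ i, (window D a i).count x = D.card * Fintype.card {i // a i = x} := by
  induction D using Multiset.induction_on with
  | empty => simp [window]
  | cons d D ih =>
    have count_translate : ∑ i, (if x = a (i + d) then 1 else 0) = Fintype.card {i // a i = x} := by
      rw [Fintype.card_subtype, Finset.card_filter]
      simp only [eq_comm (a := x)]
      exact Equiv.sum_comp (Equiv.addRight d) fun i => if a i = x then 1 else 0
    simp only [window, Multiset.map_cons, Multiset.count_cons, Multiset.card_cons,
      Finset.sum_add_distrib, count_translate] at ih ⊢
    rw [ih, add_one_mul]

theorem sum_count_sym_eq [Fintype α] [DecidableEq α] (t : ℕ) (x y : α) :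
    ∑ s : Sym α t, (s : Multiset α).count x = ∑ s : Sym α t, (s : Multiset α).count y := by
  refine Fintype.sum_equiv (Sym.equivCongr (Equiv.swap x y)) _ _ fun s => ?_
  calc (s : Multiset α).count x
      = ((s : Multiset α).map (Equiv.swap x y)).count (Equiv.swap x y x) :=
        (Multiset.count_map_eq_count' _ _ (Equiv.injective _) _).symm
    _ = (Sym.equivCongr (Equiv.swap x y) s : Multiset α).count y := by
        rw [Equiv.swap_apply_left, Sym.equivCongr_apply, Sym.coe_map]

theorem card_dvd_card_of_card_fiber_eq {β : Type*} [Fintype α] [Fintype β] [DecidableEq β]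
    (f : α → β) (h : ∀ x y, Fintype.card {i // f i = x} = Fintype.card {i // f i = y}) :
    Fintype.card β ∣ Fintype.card α := by
  have card_eq_sum : Fintype.card α = ∑ x, Fintype.card {i // f i = x} := by
    rw [← Fintype.card_sigma, Fintype.card_congr (Equiv.sigmaFiberEquiv f)]
  rcases isEmpty_or_nonempty β with _ | ⟨⟨y⟩⟩
  · simp [card_eq_sum]
  · exact ⟨Fintype.card {i // f i = y}, by simp [card_eq_sum, h _ y]⟩

namespace IsWindowUniversal

/-- The window map of a universal `a`, as a bijection from the positions to the multisets. -/
noncomputable def windowEquiv [Add G] {D : Multiset G} {a : G → α} (h : IsWindowUniversal D a) :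
    G ≃ Sym α D.card :=
  Equiv.ofBijective (fun i => ⟨window D a i, card_window D a i⟩) <|
    (Function.bijective_iff_existsUnique _).2 fun s =>
      (existsUnique_congr fun _ => Subtype.ext_iff).2 (h s s.2)

theorem card_fiber_eq [AddGroup G] [Fintype G] [Finite α] [DecidableEq α] {D : Multiset G}
    {a : G → α} (h : IsWindowUniversal D a) (hD : D ≠ 0) (x y : α) :
    Fintype.card {i // a i = x} = Fintype.card {i // a i = y} := by
  have := Fintype.ofFinite α
  have sum_window (z : α) : ∑ i, (window D a i).count z = ∑ s : Sym α D.card, s.1.count z :=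
    Equiv.sum_comp h.windowEquiv fun s => s.1.count z
  refine Nat.eq_of_mul_eq_mul_left (Multiset.card_pos.2 hD) ?_
  calc D.card * Fintype.card {i // a i = x}
      = ∑ s : Sym α D.card, s.1.count x := by rw [← sum_count_window, sum_window]
    _ = ∑ s : Sym α D.card, s.1.count y := sum_count_sym_eq _ x y
    _ = D.card * Fintype.card {i // a i = y} := by rw [← sum_count_window, sum_window]

end IsWindowUniversal

theorem IsMcycle.isWindowUniversal {n t : ℕ} {a : ZMod ((n + t - 1).choose t) → Fin n}
    (h : IsMcycle n t a) : IsWindowUniversal ((Multiset.range t).map (↑)) a := by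
  intro s hs
  rw [Multiset.card_map, Multiset.card_range] at hs
  -- The cast of `j` in `IsMcycle` elaborates to a monadic lift of `Multiset.range t`.
  simpa only [window, Multiset.pure_def, Multiset.bind_def, Multiset.bind_singleton] using h s hs

theorem mcycle_necessary_condition_general [AddGroup G] [Finite α] {D : Multiset G} (hD : D ≠ 0)
    {a : G → α} (h : IsWindowUniversal D a) : Nat.card α ∣ Nat.card G := by
  classical
  have := Fintype.ofFinite α
  have := Fintype.ofEquiv _ h.windowEquiv.symm
  simpa only [Nat.card_eq_fintype_card] using
    card_dvd_card_of_card_fiber_eq a (h.card_fiber_eq hD)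

theorem mcycle_necessary_condition (n t : ℕ) (hn : 0 < n) (ht : 0 < t)
    (h : ∃ a : ZMod ((n + t - 1).choose t) → Fin n, IsMcycle n t a) :
    n ∣ (n + t - 1).choose t := by
  obtain ⟨a, ha⟩ := h
  simpa using
    mcycle_necessary_condition_general (Multiset.card_pos.1 (by simpa)) ha.isWindowUniversal
end

section
/- For every positive integer n, a 2-Mcycle of [n] exists if and only if n is odd. -/
/-! A 2-Mcycle of `[n]` is an Eulerian circuit of the complete graph on `n` vertices with one loop
at each vertex. A loop counting twice, every vertex of that graph has degree `n + 1`, so `n` must be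
odd. Conversely, an Eulerian circuit on `2k + 1` vertices extends to one on `2k + 3`: the new edges
form a closed walk through vertex `0`, which is spliced in there. The resulting closed walk has
`C(n + 1, 2)` edges, so it traverses each edge once as soon as it misses none. -/

theorem isMcycle_two_iff_bijective {n : ℕ} (a : ZMod ((n + 2 - 1).choose 2) → Fin n) :
    IsMcycle n 2 a ↔ Function.Bijective fun i ↦ s(a i, a (i + 1)) := by
  have window_eq (i : ZMod ((n + 2 - 1).choose 2)) :
      ((Multiset.range 2).map fun j ↦ a (i + (j : ZMod ((n + 2 - 1).choose 2)))) =
        (Sym2.equivMultiset (Fin n) s(a i, a (i + 1)) : Multiset (Fin n)) := by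
    trans {a (i + 1), a i}
    · simp [Multiset.range_succ]
    · exact Multiset.pair_comm _ _
  simp only [IsMcycle, window_eq]
  rw [← (Sym2.equivMultiset (Fin n)).comp_bijective, Function.bijective_iff_existsUnique,
    Subtype.forall]
  simp only [Function.comp_apply, Subtype.ext_iff]

section Degree

open Finset

variable {V : Type*}

theorem count_toMultiset_mk [DecidableEq V] (x u v : V) :
    s(u, v).toMultiset.count x = (if u = x then 1 else 0) + if v = x then 1 else 0 := by
  simp [Sym2.toMultiset, List.count_cons, add_comm]

theorem count_toMultiset_eq_ite_mem_add_ite_eq [DecidableEq V] (x : V) (e : Sym2 V) :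
    e.toMultiset.count x = (if x ∈ e then 1 else 0) + if e = s(x, x) then 1 else 0 := by
  induction e with | _ u v
  by_cases hu : u = x <;> by_cases hv : v = x <;>
    simp [count_toMultiset_mk, hu, hv, @eq_comm V x]

variable [Fintype V]

theorem card_filter_mem_sym2 [DecidableEq V] (x : V) : #{e : Sym2 V | x ∈ e} = Fintype.card V := by
  have image_eq : ({e : Sym2 V | x ∈ e} : Finset (Sym2 V)) = univ.map (Sym2.mkEmbedding x) := by
    ext e
    simp [Sym2.mem_iff_exists, eq_comm]
  rw [image_eq, card_map, card_univ]

theorem sum_count_toMultiset_sym2 [DecidableEq V] (x : V) :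
    ∑ e : Sym2 V, e.toMultiset.count x = Fintype.card V + 1 := by
  simp only [count_toMultiset_eq_ite_mem_add_ite_eq]
  rw [sum_add_distrib, ← card_filter, card_filter_mem_sym2, sum_ite_eq' univ, if_pos (mem_univ _)]

theorem odd_card_of_bijective_sym2_window {ι : Type*} [Nonempty V] (σ : Equiv.Perm ι) {a : ι → V}
    (ha : Function.Bijective fun i ↦ s(a i, a (σ i))) : Odd (Fintype.card V) := by
  classical
  have : Finite ι := Finite.of_injective _ ha.injective
  have : Fintype ι := Fintype.ofFinite ι
  obtain ⟨x⟩ := ‹Nonempty V›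
  have degree_eq : Fintype.card V + 1 = 2 * #{i | a i = x} := calc
    Fintype.card V + 1 = ∑ i, s(a i, a (σ i)).toMultiset.count x := by
      rw [← sum_count_toMultiset_sym2 x, ← ha.sum_comp]
    _ = 2 * #{i | a i = x} := by
      simp only [count_toMultiset_mk]
      rw [sum_add_distrib, Equiv.sum_comp σ fun i ↦ if a i = x then 1 else 0, ← two_mul,
        card_filter]
  rw [Nat.odd_iff]
  omega

end Degree

section Walk

variable {α : Type*}

/-- The edges, in order, of the walk from `u` to `w` whose interior vertices are listed in `l`. -/
def walkEdges (u : α) (l : List α) (w : α) : List (Sym2 α) :=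
  List.zipWith (fun x y ↦ s(x, y)) (u :: l) (l ++ [w])

@[simp]
theorem walkEdges_nil (u w : α) : walkEdges u [] w = [s(u, w)] := rfl

@[simp]
theorem walkEdges_cons (u v : α) (l : List α) (w : α) :
    walkEdges u (v :: l) w = s(u, v) :: walkEdges v l w := rfl

theorem exists_zmod_forall_mem_walkEdges (v : α) (l : List α) {m : ℕ} (hm : l.length + 1 = m) :
    ∃ a : ZMod m → α, ∀ e ∈ walkEdges v l v, ∃ i, s(a i, a (i + 1)) = e := by
  subst hm
  refine ⟨fun i ↦ (v :: l)[i.val]'(ZMod.val_lt i), fun e he ↦ ?_⟩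
  have rotate_eq : l ++ [v] = (v :: l).rotate 1 := by simp
  rw [walkEdges, rotate_eq] at he
  obtain ⟨j, hj, rfl⟩ := List.mem_iff_getElem.mp he
  have hj' : j < l.length + 1 := by simpa using hj
  refine ⟨(j : ZMod (l.length + 1)), ?_⟩
  have val_succ : ((j : ZMod (l.length + 1)) + 1).val = (j + 1) % (l.length + 1) := by
    rw [← Nat.cast_succ, ZMod.val_natCast]
  simp only [ZMod.val_cast_of_lt hj', val_succ, List.getElem_zipWith, List.getElem_rotate,
    List.length_cons]

end Walk

/-- The vertices after `x` of the closed walk `x, 2k - 1, y, 2k, x, …, x, 1, y, 2, x`, which joins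
each of `x` and `y` to each of `1, …, 2k`. -/
def zigzag (x y : ℕ) : ℕ → List ℕ
  | 0 => []
  | k + 1 => (2 * k + 1) :: y :: (2 * k + 2) :: x :: zigzag x y k

theorem length_zigzag (x y k : ℕ) : (zigzag x y k).length = 4 * k := by
  induction k with
  | zero => rfl
  | succ k ih => simp only [zigzag, List.length_cons, ih]; ring

theorem mem_walkEdges_zigzag_append {x y k : ℕ} {l : List ℕ} {w : ℕ} {e : Sym2 ℕ} :
    e ∈ walkEdges x (zigzag x y k ++ l) w ↔
      (∃ v, 1 ≤ v ∧ v ≤ 2 * k ∧ (e = s(x, v) ∨ e = s(y, v))) ∨ e ∈ walkEdges x l w := by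
  induction k with
  | zero => exact (or_iff_right (by rintro ⟨v, hv, hv', -⟩; omega)).symm
  | succ k ih =>
    have le_iff (v : ℕ) : 1 ≤ v ∧ v ≤ 2 * (k + 1) ↔
        v = 2 * k + 1 ∨ v = 2 * k + 2 ∨ 1 ≤ v ∧ v ≤ 2 * k := by omega
    simp only [zigzag, List.cons_append, walkEdges_cons, List.mem_cons, ih, ← and_assoc, le_iff,
      or_and_right, exists_or, exists_eq_left, Sym2.eq_swap (a := 2 * k + 1),
      Sym2.eq_swap (a := 2 * k + 2), or_assoc, or_left_comm]

/-- The interior of an Eulerian circuit, based at `0`, of the complete graph with loops on the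
vertices `0, …, 2k`. The empty interior for `k = 0` is the loop at `0`. -/
def tour : ℕ → List ℕ
  | 0 => []
  | k + 1 => (2 * k + 1) :: (2 * k + 1) :: (zigzag (2 * k + 1) (2 * k + 2) k ++
      (2 * k + 2) :: (2 * k + 2) :: 0 :: tour k)

theorem length_tour_add_one (k : ℕ) : (tour k).length + 1 = (2 * k + 2).choose 2 := by
  have length_eq : (tour k).length + 1 = (2 * k + 1) * (k + 1) := by
    induction k with
    | zero => rfl
    | succ k ih =>
      simp only [tour, List.length_cons, List.length_append, length_zigzag]
      linarith
  rw [length_eq, Nat.choose_two_right]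
  symm
  apply Nat.div_eq_of_eq_mul_left two_pos
  simp only [Nat.add_one_sub_one]
  ring

theorem mem_walkEdges_tour {k u v : ℕ} (hu : u ≤ 2 * k) (hv : v ≤ 2 * k) :
    s(u, v) ∈ walkEdges 0 (tour k) 0 := by
  wlog huv : u ≤ v generalizing u v
  · rw [Sym2.eq_swap]
    exact this hv hu (le_of_not_ge huv)
  induction k with
  | zero =>
    obtain ⟨rfl, rfl⟩ : u = 0 ∧ v = 0 := by omega
    simp [tour]
  | succ k ih =>
    simp only [tour, walkEdges_cons, List.mem_cons, mem_walkEdges_zigzag_append]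
    have cases_uv : v ≤ 2 * k ∨ 1 ≤ u ∧ u ≤ 2 * k ∧ (v = 2 * k + 1 ∨ v = 2 * k + 2) ∨
        u = 0 ∧ (v = 2 * k + 1 ∨ v = 2 * k + 2) ∨
        u = 2 * k + 1 ∧ (v = 2 * k + 1 ∨ v = 2 * k + 2) ∨
        u = 2 * k + 2 ∧ v = 2 * k + 2 := by omega
    rcases cases_uv with hv' | ⟨hu₁, hu₂, hv'⟩ | ⟨rfl, rfl | rfl⟩ | ⟨rfl, rfl | rfl⟩ | ⟨rfl, rfl⟩
    · simp only [ih (huv.trans hv') hv', or_true]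
    · have joined : ∃ z, 1 ≤ z ∧ z ≤ 2 * k ∧
          (s(u, v) = s(2 * k + 1, z) ∨ s(u, v) = s(2 * k + 2, z)) :=
        ⟨u, hu₁, hu₂, by rcases hv' with rfl | rfl <;> simp [Sym2.eq_swap]⟩
      simp only [joined, true_or, or_true]
    all_goals simp

theorem exists_bijective_sym2_window (k : ℕ) :
    ∃ a : ZMod ((2 * k + 2).choose 2) → Fin (2 * k + 1),
      Function.Bijective fun i ↦ s(a i, a (i + 1)) := by
  have : NeZero ((2 * k + 2).choose 2) := ⟨(Nat.choose_pos (by omega)).ne'⟩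
  obtain ⟨b, hb⟩ := exists_zmod_forall_mem_walkEdges 0 (tour k) (length_tour_add_one k)
  -- Reduction modulo `2k + 1` fixes `0, …, 2k`, so the entries of `tour k` need not be bounded.
  refine ⟨fun i ↦ Fin.ofNat (2 * k + 1) (b i), ?_⟩
  rw [Fintype.bijective_iff_surjective_and_card]
  refine ⟨fun e ↦ ?_, by rw [ZMod.card, Sym2.card, Fintype.card_fin]⟩
  induction e with | _ u v
  obtain ⟨i, hi⟩ := hb s(u.val, v.val) (mem_walkEdges_tour (by omega) (by omega))
  refine ⟨i, ?_⟩
  simpa using congrArg (Sym2.map (Fin.ofNat (2 * k + 1))) hi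

theorem two_mcycle_iff_odd (n : ℕ) (hn : 0 < n) :
    (∃ a : ZMod ((n + 2 - 1).choose 2) → Fin n, IsMcycle n 2 a) ↔ Odd n := by
  constructor
  · rintro ⟨a, ha⟩
    have : NeZero n := ⟨hn.ne'⟩
    simpa only [Fintype.card_fin] using
      odd_card_of_bijective_sym2_window (Equiv.addRight 1) ((isMcycle_two_iff_bijective a).mp ha)
  · rintro ⟨k, rfl⟩
    obtain ⟨a, ha⟩ := exists_bijective_sym2_window k
    exact ⟨a, (isMcycle_two_iff_bijective a).mpr ha⟩
end

section
/- For every integer n ≥ 4 with n not divisible by 3, a 3-Mcycle of [n] exists. -/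
/-!
Order each multiset of three letters of `ℤ/n` cyclically; its gaps form a cyclic triple with
sum `0`. Since `3 ∤ n`, the three gaps are equal only if they vanish, so keeping two equal gaps if
there are any, and otherwise dropping the gap of highest rank, singles out one ordering `x, x + d,
x + d + e` of the multiset. The rule is symmetric in the kept gaps `d, e`, so in the directed
multigraph whose vertices are the pairs `(x, x + d)` and whose edges are these orderings,
exchanging the gaps assigns to each edge a successor, bijectively. Hence every component has an
Eulerian circuit, and for `n > 4` everything is connected through the constant words: this is an
Mcycle. For `n = 4` the letter pairs at distance `2` form components of their own, and an Mcycle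
is written down instead.
-/

open Function Equiv.Perm

section CircularTriples

variable {α : Type*}

theorem triple_eq_triple_iff {x y z p q r : α} :
    ({p, q, r} : Multiset α) = {x, y, z} ↔
      (p = x ∧ q = y ∧ r = z) ∨ (p = y ∧ q = x ∧ r = z) ∨ (p = y ∧ q = z ∧ r = x) ∨
      (p = x ∧ q = z ∧ r = y) ∨ (p = z ∧ q = x ∧ r = y) ∨ (p = z ∧ q = y ∧ r = x) := by
  have : ({p, q, r} : Multiset α) = {x, y, z} ↔ [p, q, r] ∈ [x, y, z].permutations' := by
    rw [List.mem_permutations', ← Multiset.coe_eq_coe]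
    rfl
  simpa [List.permutations'] using this

theorem triple_rotate (x y z : α) : ({y, z, x} : Multiset α) = {x, y, z} :=
  triple_eq_triple_iff.2 (by simp)

theorem exists_btw_eq_triple [CircularOrder α] {s : Multiset α} (hs : s.card = 3) :
    ∃ x y z, btw x y z ∧ s = {x, y, z} := by
  obtain ⟨x, y, z, rfl⟩ := Multiset.card_eq_three.1 hs
  rcases btw_total x y z with h | h
  · exact ⟨x, y, z, h, rfl⟩
  · exact ⟨z, y, x, h, triple_eq_triple_iff.2 (by simp)⟩

theorem eq_rotation_of_btw_of_btw [CircularOrder α] {x y z p q r : α} (h : btw x y z)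
    (h' : btw p q r) (heq : ({p, q, r} : Multiset α) = {x, y, z}) :
    (p = x ∧ q = y ∧ r = z) ∨ (p = y ∧ q = z ∧ r = x) ∨ (p = z ∧ q = x ∧ r = y) := by
  rcases triple_eq_triple_iff.1 heq with
    e | ⟨rfl, rfl, rfl⟩ | e | ⟨rfl, rfl, rfl⟩ | e | ⟨rfl, rfl, rfl⟩
  · exact .inl e
  · rcases h.antisymm h'.cyclic_right with rfl | rfl | rfl <;> simp
  · exact .inr (.inl e)
  · rcases h.antisymm h'.cyclic_left with rfl | rfl | rfl <;> simp
  · exact .inr (.inr e)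
  · rcases h.antisymm h' with rfl | rfl | rfl <;> simp

end CircularTriples

section OrbitWindow

variable {E F α : Type*}

/-- The multiset of the first `t` letters `a e, a (f e), a (f (f e)), …` read along the orbit
of `e` under `f`. -/
def orbitWindow (f : E → E) (a : E → α) (t : ℕ) (e : E) : Sym α t :=
  .mk ((Multiset.range t).map fun j => a (f^[j] e)) (by simp)

theorem coe_orbitWindow (f : E → E) (a : E → α) (t : ℕ) (e : E) :
    (orbitWindow f a t e : Multiset α) = (Multiset.range t).map fun j => a (f^[j] e) :=
  rfl

theorem orbitWindow_comp {f : E → E} {f' : F → F} {g : E → F} (h : Semiconj g f f')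
    (a : F → α) (t : ℕ) : orbitWindow f (a ∘ g) t = orbitWindow f' a t ∘ g := by
  funext e
  apply Sym.ext
  simp only [coe_orbitWindow, comp_apply, (h.iterate_right _).eq]

theorem orbitWindow_three (f : E → E) (a : E → α) (e : E) :
    (orbitWindow f a 3 e : Multiset α) = {a e, a (f e), a (f (f e))} :=
  rfl

theorem isMcycle_iff_bijective_orbitWindow {n t : ℕ} {a : ZMod ((n + t - 1).choose t) → Fin n} :
    IsMcycle n t a ↔ Bijective (orbitWindow (· + 1) a t) := by
  simp [IsMcycle, bijective_iff_existsUnique, Sym.forall, ← Sym.coe_inj, coe_orbitWindow]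

theorem exists_bijective_semiconj_of_isCycleOn_univ [Nonempty E] [Finite E] {σ : Equiv.Perm E}
    (hσ : σ.IsCycleOn Set.univ) {m : ℕ} (hm : Nat.card E = m) :
    ∃ g : ZMod m → E, Bijective g ∧ Semiconj g (· + 1) σ := by
  have := Fintype.ofFinite E
  obtain ⟨e₀⟩ := ‹Nonempty E›
  rw [← Finset.coe_univ] at hσ
  rw [Nat.card_eq_fintype_card] at hm
  have pow_eq_pow_iff (k l : ℕ) : (σ ^ k) e₀ = (σ ^ l) e₀ ↔ (k : ZMod m) = l := by
    rw [hσ.pow_apply_eq_pow_apply (Finset.mem_univ e₀), Finset.card_univ, hm,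
      ZMod.natCast_eq_natCast_iff]
  have : NeZero m := ⟨hm ▸ Fintype.card_ne_zero⟩
  refine ⟨fun i => (σ ^ i.val) e₀, ⟨fun i j hij => ?_, fun e => ?_⟩, fun i => ?_⟩
  · simpa [pow_eq_pow_iff] using hij
  · obtain ⟨k, -, hk⟩ := hσ.exists_pow_eq (Finset.mem_univ e₀) (Finset.mem_univ e)
    exact ⟨k, hk ▸ by simp [pow_eq_pow_iff]⟩
  · rw [← mul_apply, ← pow_succ', pow_eq_pow_iff]
    simp

theorem exists_isMcycle_of_bijective_orbitWindow [Nonempty E] [Finite E] {σ : Equiv.Perm E}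
    (hσ : σ.IsCycleOn Set.univ) {n t : ℕ} {a : E → Fin n} (ha : Bijective (orbitWindow σ a t)) :
    ∃ b, IsMcycle n t b := by
  have hcard : Nat.card E = (n + t - 1).choose t := by
    rw [Nat.card_eq_of_bijective _ ha, Nat.card_eq_fintype_card, Sym.card_sym_eq_choose,
      Fintype.card_fin]
  obtain ⟨g, hg, hgσ⟩ := exists_bijective_semiconj_of_isCycleOn_univ hσ hcard
  refine ⟨a ∘ g, isMcycle_iff_bijective_orbitWindow.2 ?_⟩
  rw [orbitWindow_comp hgσ]
  exact ha.comp hg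

end OrbitWindow

section Euler

variable {E V : Type*}

theorem sameCycle_mul_swap [Finite E] [DecidableEq E] {σ : Equiv.Perm E} {e f : E}
    (h : ¬ σ.SameCycle e f) : (σ * Equiv.swap e f).SameCycle e f := by
  set τ := σ * Equiv.swap e f with hτ
  by_contra hef
  -- Starting at `e`, `τ` enters the `σ`-orbit of `f` and leaves it only after visiting `f`.
  have iterate_mem (k : ℕ) : σ.SameCycle f ((τ ^ (k + 1)) e) := by
    induction k with
    | zero => simp [hτ, SameCycle.refl]
    | succ k ih =>
      have ne_e : (τ ^ (k + 1)) e ≠ e := fun hk => h (hk ▸ ih).symm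
      have ne_f : (τ ^ (k + 1)) e ≠ f := fun hk => hef ⟨(k + 1 : ℕ), mod_cast hk⟩
      rw [pow_succ', mul_apply]
      nth_rw 1 [hτ]
      rwa [mul_apply, Equiv.swap_apply_of_ne_of_ne ne_e ne_f, sameCycle_apply_right]
  refine h ?_
  simpa [Nat.sub_add_cancel (orderOf_pos τ), pow_orderOf_eq_one, sameCycle_comm] using
    iterate_mem (orderOf τ - 1)

theorem setoid_le_setoid_mul_swap [DecidableEq E] {σ : Equiv.Perm E} {e f : E}
    (h : (σ * Equiv.swap e f).SameCycle e f) :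
    SameCycle.setoid σ ≤ SameCycle.setoid (σ * Equiv.swap e f) := by
  set τ := σ * Equiv.swap e f with hτ
  have sameCycle_apply (x : E) : τ.SameCycle x (σ x) := by
    rcases eq_or_ne x e with rfl | hxe
    · simpa [hτ] using h.trans (sameCycle_apply_right.2 (.refl τ f))
    rcases eq_or_ne x f with rfl | hxf
    · simpa [hτ] using h.symm.trans (sameCycle_apply_right.2 (.refl τ e))
    simpa [hτ, Equiv.swap_apply_of_ne_of_ne hxe hxf] using
      sameCycle_apply_right.2 (SameCycle.refl τ x)
  rintro x _ ⟨k, rfl⟩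
  change τ.SameCycle x _
  induction k with
  | zero => exact .refl _ _
  | succ k ih =>
    rw [add_comm, zpow_one_add]
    exact ih.trans (sameCycle_apply _)
  | pred k ih =>
    have := sameCycle_apply ((σ ^ (-(k : ℤ) - 1)) x)
    rw [← mul_apply, ← zpow_one_add, add_sub_cancel] at this
    exact ih.trans this.symm

/-- Connectedness of two edges of the directed multigraph on `V` with the given tails and heads.
A class consists of the edges of a component. -/
def edgeSetoid (tail head : E → V) : Setoid E :=
  Relation.EqvGen.setoid fun e f => head e = tail f

theorem exists_isCycleOn_univ_of_edgeSetoid_eq_top [Finite E] {tail head : E → V}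
    {σ₀ : Equiv.Perm E} (hσ₀ : ∀ e, tail (σ₀ e) = head e) (hconn : edgeSetoid tail head = ⊤) :
    ∃ σ : Equiv.Perm E, (∀ e, tail (σ e) = head e) ∧ σ.IsCycleOn Set.univ := by
  classical
  -- A choice of successors with maximal orbits: exchanging the successors of two edges with the
  -- same head in different orbits would merge those orbits.
  obtain ⟨σ, hσ, hmax⟩ := Set.Finite.exists_maximalFor SameCycle.setoid
    {σ : Equiv.Perm E | ∀ e, tail (σ e) = head e} (Set.toFinite _) ⟨σ₀, hσ₀⟩
  have sameCycle_of_head_eq {e f : E} (h : head e = head f) : σ.SameCycle e f := by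
    by_contra hef
    have hτ := sameCycle_mul_swap hef
    refine hef (hmax (fun x => ?_) (setoid_le_setoid_mul_swap hτ) hτ)
    rw [mul_apply, hσ, Equiv.swap_apply_def]
    split_ifs with hxe hxf <;> simp [*]
  have hle : edgeSetoid tail head ≤ SameCycle.setoid σ :=
    Setoid.eqvGen_le fun e f hef => by
      obtain ⟨g, rfl⟩ := σ.surjective f
      exact sameCycle_apply_right.2 (sameCycle_of_head_eq (hef.trans (hσ g)))
  exact ⟨σ, hσ, σ.bijective.bijOn_univ, fun e _ f _ => hle (hconn ▸ trivial)⟩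

end Euler

section SelectsPair

variable {α β : Type*} [LinearOrder β] {κ : α → β} {a b c : α}

/-- A rule choosing two consecutive entries `a, b` of the cyclic triple `(a, b, c)`: two equal
entries if there are any, and otherwise all but the one ranked highest by `κ`. -/
def SelectsPair (κ : α → β) (a b c : α) : Prop :=
  a = b ∨ κ a < κ c ∧ κ b < κ c

theorem SelectsPair.symm (h : SelectsPair κ a b c) : SelectsPair κ b a c :=
  h.imp Eq.symm And.symm

theorem SelectsPair.eq_of_rotate (h : SelectsPair κ a b c) (h' : SelectsPair κ b c a) :
    a = b ∧ b = c := by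
  grind [SelectsPair]

theorem selectsPair_or_rotate (hκ : Injective κ) (a b c : α) :
    SelectsPair κ a b c ∨ SelectsPair κ b c a ∨ SelectsPair κ c a b := by
  have (x y : α) : x = y ∨ κ x < κ y ∨ κ y < κ x := by
    grind [hκ.eq_iff (a := x) (b := y)]
  grind [SelectsPair]

end SelectsPair

section Gaps

variable {n : ℕ}

theorem val_sub_add_val_sub_le_iff_btw {x y z : Fin n} :
    (y - x).val + (z - y).val ≤ n ↔ btw x y z := by
  have := Fin.intCast_val_sub_eq_sub_add_ite y x
  have := Fin.intCast_val_sub_eq_sub_add_ite z y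
  simp only [Fin.btw_iff, Fin.le_def] at *
  split_ifs at * <;> omega

/-- The order in which the gaps of a triple are kept. The half turn comes first, not last: otherwise
it would be kept only next to another half turn, which would disconnect the transition graph. -/
def gapRank (d : Fin n) : ℕ :=
  if 2 * d.val = n then 0 else d.val + 1

theorem gapRank_injective : Injective (gapRank (n := n)) := by
  intro d e h
  unfold gapRank at h
  split_ifs at h <;> omega

theorem val_neg_add [NeZero n] {d e : Fin n} (h : d.val + e.val ≤ n) :
    (-(d + e)).val = if d.val + e.val = 0 then 0 else n - (d.val + e.val) := by
  have := Fin.val_add_eq_ite d e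
  rw [Fin.val_neg]
  simp only [← Fin.val_eq_zero_iff]
  split_ifs at * <;> omega

/-- `d` and `e` are the consecutive gaps chosen by `SelectsPair` in a triple that winds around the
circle at most once. The third gap is `-(d + e)`. -/
def IsGapPair (d e : Fin n) : Prop :=
  d.val + e.val ≤ n ∧ SelectsPair gapRank d e (-(d + e))

namespace IsGapPair

variable {d e : Fin n}

theorem symm (h : IsGapPair d e) : IsGapPair e d :=
  ⟨add_comm d.val e.val ▸ h.1, add_comm d e ▸ h.2.symm⟩

variable [NeZero n]

theorem two_mul_val_le (h : IsGapPair d e) : 2 * d.val ≤ n := by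
  obtain ⟨hle, rfl | ⟨hlt, -⟩⟩ := h
  · omega
  · have := val_neg_add hle
    unfold gapRank at hlt
    split_ifs at * <;> omega

theorem zero_left (h : 2 * d.val < n) : IsGapPair 0 d := by
  have hle : (0 : Fin n).val + d.val ≤ n := by simp
  have := val_neg_add hle
  refine ⟨hle, or_iff_not_imp_left.2 fun hd => ?_⟩
  rw [← Fin.val_inj, Fin.val_zero] at hd
  simp only [gapRank, Fin.val_zero, zero_add] at *
  split_ifs at * <;> omega

theorem one_left (hn : 4 < n) (h : 2 * d.val = n) : IsGapPair 1 d := by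
  have h1 : (1 : Fin n).val = 1 := by rw [Fin.val_one', Nat.mod_eq_of_lt (by omega)]
  have hle : (1 : Fin n).val + d.val ≤ n := by omega
  have := val_neg_add hle
  refine ⟨hle, .inr ?_⟩
  simp only [gapRank, h1] at *
  split_ifs at * <;> omega

theorem eq_zero_of_rotate (h3 : ¬ 3 ∣ n) (h : IsGapPair d e) (h' : IsGapPair e (-(d + e))) :
    d = 0 ∧ e = 0 := by
  obtain ⟨hde, he⟩ := h.2.eq_of_rotate (c := -(d + e)) <| by simpa using h'.2
  have three_nsmul_injective : Injective (3 • · : Fin n → Fin n) := by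
    refine (Nat.Coprime.nsmul_right_bijective ?_).injective
    rwa [Nat.card_fin, Nat.coprime_comm, Nat.Prime.coprime_iff_not_dvd Nat.prime_three]
  have he₀ : e = 0 := three_nsmul_injective <| by
    rw [hde, eq_neg_iff_add_eq_zero] at he
    simpa [succ_nsmul, add_assoc] using he
  exact ⟨hde.trans he₀, he₀⟩

end IsGapPair

/-- The word `start`, `start + fst`, `start + fst + snd`, of a shape which orders each multiset of
three letters in exactly one way if `3 ∤ n`. -/
@[ext]
structure GapWord (n : ℕ) where
  start : Fin n
  fst : Fin n
  snd : Fin n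
  isGapPair : IsGapPair fst snd

namespace GapWord

instance : Finite (GapWord n) :=
  Finite.of_injective (fun w => (w.start, w.fst, w.snd)) fun v w h => by
    simpa [GapWord.ext_iff] using h

/-- The initial vertex of `w` as an edge of the transition graph, with the pair of letters
`(x, x + d)` encoded as `(x, d)`. -/
def tail (w : GapWord n) : Fin n × Fin n :=
  (w.start, w.fst)

/-- The terminal vertex of `w` as an edge of the transition graph, encoded as for `tail`. -/
def head (w : GapWord n) : Fin n × Fin n :=
  (w.start + w.fst, w.snd)

/-- The multiset of letters of a word. -/
def content (w : GapWord n) : Sym (Fin n) 3 :=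
  .mk {w.start, w.start + w.fst, w.start + w.fst + w.snd} (by simp)

theorem orbitWindow_eq_content {σ : Equiv.Perm (GapWord n)} (hσ : ∀ w, (σ w).tail = w.head) :
    orbitWindow σ start 3 = content := by
  have start_apply (w : GapWord n) : (σ w).start = w.start + w.fst := congrArg Prod.fst (hσ w)
  have fst_apply (w : GapWord n) : (σ w).fst = w.snd := congrArg Prod.snd (hσ w)
  funext w
  refine Sym.ext ?_
  rw [orbitWindow_three, start_apply (σ w), start_apply, fst_apply]
  rfl

variable [NeZero n]

/-- The successor permutation of the edges of the transition graph given by the symmetry of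
`IsGapPair`, which splits the graph into circuits. -/
def swapGaps : Equiv.Perm (GapWord n) where
  toFun w := ⟨w.start + w.fst, w.snd, w.fst, w.isGapPair.symm⟩
  invFun w := ⟨w.start - w.snd, w.snd, w.fst, w.isGapPair.symm⟩
  left_inv w := by ext <;> simp
  right_inv w := by ext <;> simp

theorem tail_swapGaps (w : GapWord n) : w.swapGaps.tail = w.head :=
  rfl

theorem btw_content (w : GapWord n) :
    btw w.start (w.start + w.fst) (w.start + w.fst + w.snd) :=
  val_sub_add_val_sub_le_iff_btw.1 (by simpa using w.isGapPair.1)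

theorem exists_content_eq {x y z : Fin n} (hbtw : btw x y z)
    (h : SelectsPair gapRank (y - x) (z - y) (x - z)) :
    ∃ w : GapWord n, (w.content : Multiset (Fin n)) = {x, y, z} :=
  ⟨⟨x, y - x, z - y, val_sub_add_val_sub_le_iff_btw.2 hbtw, by simpa using h⟩, by simp [content]⟩

theorem content_surjective : Surjective (content (n := n)) := by
  intro s
  obtain ⟨x, y, z, hbtw, hs⟩ := exists_btw_eq_triple s.card_coe
  simp only [← Sym.coe_inj, hs]
  rcases selectsPair_or_rotate gapRank_injective (y - x) (z - y) (x - z) with h | h | h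
  · exact exists_content_eq hbtw h
  · rw [← triple_rotate]
    exact exists_content_eq hbtw.cyclic_left h
  · rw [triple_rotate z]
    exact exists_content_eq hbtw.cyclic_right h

theorem eq_of_rotate (h3 : ¬ 3 ∣ n) {v w : GapWord n} (h₀ : v.start = w.start + w.fst)
    (h₁ : v.start + v.fst = w.start + w.fst + w.snd)
    (h₂ : v.start + v.fst + v.snd = w.start) : v = w := by
  have hfst : v.fst = w.snd := by rwa [h₀, add_right_inj] at h₁
  have hsnd : v.snd = -(w.fst + w.snd) := by
    rwa [h₁, add_assoc, add_assoc, add_eq_left, ← add_assoc, add_comm,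
      ← eq_neg_iff_add_eq_zero] at h₂
  obtain ⟨hw₁, hw₂⟩ := w.isGapPair.eq_zero_of_rotate h3 (by rw [← hsnd, ← hfst]; exact v.isGapPair)
  ext <;> simp [*]

theorem content_injective (h3 : ¬ 3 ∣ n) : Injective (content (n := n)) := by
  intro v w h
  rcases eq_rotation_of_btw_of_btw w.btw_content v.btw_content (congrArg Sym.toMultiset h) with
    ⟨h₀, h₁, h₂⟩ | ⟨h₀, h₁, h₂⟩ | ⟨h₀, h₁, h₂⟩
  · rw [h₀, add_right_inj] at h₁
    rw [h₀, h₁, add_right_inj] at h₂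
    exact GapWord.ext h₀ h₁ h₂
  · exact eq_of_rotate h3 h₀ h₁ h₂
  · exact (eq_of_rotate h3 h₁.symm h₂.symm h₀.symm).symm

/-- The word `x, x, x`. -/
def const (x : Fin n) : GapWord n :=
  ⟨x, 0, 0, .zero_left (by simpa using Nat.pos_of_neZero n)⟩

instance : Nonempty (GapWord n) :=
  ⟨const 0⟩

theorem edgeSetoid_const_start (w : GapWord n) (h : 2 * w.fst.val < n) :
    edgeSetoid tail head (const w.start) w := by
  let u : GapWord n := ⟨w.start, 0, w.fst, .zero_left h⟩
  exact .trans _ u _ (.rel _ _ (by simp [u, const, head, tail]))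
    (.rel _ _ (by simp [u, head, tail]))

theorem edgeSetoid_const_const_add_one (hn : 2 < n) (x : Fin n) :
    edgeSetoid tail head (const x) (const (x + 1)) := by
  have h1 : 2 * (1 : Fin n).val < n := by rw [Fin.val_one', Nat.mod_eq_of_lt] <;> omega
  let u : GapWord n := ⟨x, 1, 0, (IsGapPair.zero_left h1).symm⟩
  exact .trans _ u _ (edgeSetoid_const_start u h1) (.rel _ _ (by simp [u, const, head, tail]))

open scoped Fin.NatCast in
theorem edgeSetoid_const_const (hn : 2 < n) (x y : Fin n) :
    edgeSetoid tail head (const x) (const y) := by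
  have connected_zero_nsmul (k : ℕ) :
      edgeSetoid tail head (const (0 : Fin n)) (const (k • 1)) := by
    induction k with
    | zero => rw [zero_nsmul]
    | succ k ih =>
      rw [succ_nsmul]
      exact Setoid.trans' _ ih (edgeSetoid_const_const_add_one hn _)
  have connected_zero (x : Fin n) : edgeSetoid tail head (const 0) (const x) := by
    simpa only [nsmul_one, Fin.cast_val_eq_self] using connected_zero_nsmul x.val
  exact Setoid.trans' _ (Setoid.symm' _ (connected_zero x)) (connected_zero y)

theorem edgeSetoid_eq_top (hn : 4 < n) : edgeSetoid (tail (n := n)) head = ⊤ := by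
  have connected_const_zero (w : GapWord n) : edgeSetoid tail head (const 0) w := by
    rcases w.isGapPair.two_mul_val_le.lt_or_eq with h | h
    · exact Setoid.trans' _ (edgeSetoid_const_const (by omega) _ _) (edgeSetoid_const_start w h)
    · let u : GapWord n := ⟨w.start - 1, 1, w.fst, .one_left hn h⟩
      have hu : 2 * u.fst.val < n := by
        rw [Fin.val_one', Nat.mod_eq_of_lt] <;> omega
      have hw : edgeSetoid tail head u w := .rel _ _ (by simp [u, head, tail])
      exact Setoid.trans' _ (Setoid.trans' _ (edgeSetoid_const_const (by omega) _ _)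
        (edgeSetoid_const_start u hu)) hw
  exact eq_top_iff.2 fun v w _ =>
    Setoid.trans' _ (Setoid.symm' _ (connected_const_zero v)) (connected_const_zero w)

end GapWord

end Gaps

theorem exists_isMcycle_three {n : ℕ} (hn : 4 < n) (h3 : ¬ 3 ∣ n) : ∃ a, IsMcycle n 3 a := by
  have : NeZero n := ⟨by omega⟩
  obtain ⟨σ, hσ, hcycle⟩ := exists_isCycleOn_univ_of_edgeSetoid_eq_top GapWord.tail_swapGaps
    (GapWord.edgeSetoid_eq_top hn)
  refine exists_isMcycle_of_bijective_orbitWindow hcycle (a := GapWord.start) ?_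
  rw [GapWord.orbitWindow_eq_content hσ]
  exact ⟨GapWord.content_injective h3, GapWord.content_surjective⟩

set_option maxRecDepth 100000 in
theorem exists_isMcycle_four_three : ∃ a, IsMcycle 4 3 a := by
  let a : Fin 20 → Fin 4 := ![0, 0, 0, 1, 1, 1, 2, 0, 2, 0, 3, 1, 3, 1, 2, 2, 2, 3, 3, 3]
  have ha : Injective (orbitWindow (· + 1) a 3) := by decide
  have card_eq : Fintype.card (Fin 20) = Fintype.card (Sym (Fin 4) 3) := by
    rw [Sym.card_sym_eq_choose]
    rfl
  have ha' : Bijective (orbitWindow (· + 1) a 3) :=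
    (Fintype.bijective_iff_injective_and_card _).2 ⟨ha, card_eq⟩
  exact ⟨a, isMcycle_iff_bijective_orbitWindow.2 ha'⟩

theorem three_mcycle_exists (n : ℕ) (hn : 4 ≤ n) (h3 : ¬ (3 ∣ n)) :
    ∃ a : ZMod ((n + 3 - 1).choose 3) → Fin n, IsMcycle n 3 a := by
  obtain rfl | hn := hn.eq_or_lt
  · exact exists_isMcycle_four_three
  · exact exists_isMcycle_three hn h3
end

section
/- For every integer n ≥ 5 with gcd(n, 4) = 1, a 4-Mcycle of [n] exists. -/
/-!
Read the points of a 4-multiset of `ℤ/n` once around the circle: this records a starting point `a`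
and four consecutive gaps `x, y, z, w` of sum `n`, and the starting point is the only choice. When
`n` is odd, some gap occurs exactly once among the four, so there is a canonical reading: the one
whose last gap `w` is the largest gap occurring exactly once. This makes the 4-multisets the edges
`(a, x, y) → (a + x, y, z)` of a directed graph in which consecutive edges are overlapping windows,
so an Eulerian circuit is an Mcycle. Every vertex is balanced because the condition on
`(x, y, z, w)` is invariant under cyclic shifts of `(x, y, z)`, and the graph is connected once
`n ≥ 5`.
-/

open Equiv Multiset

section EulerianCircuit

variable {E V : Type*} [Finite E]

theorem sameCycle_mul_swap_self [DecidableEq E] {τ : Perm E} {a b : E}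
    (hab : ¬τ.SameCycle a b) : (τ * swap a b).SameCycle a b := by
  set ρ := τ * swap a b with hρ
  have hρb : ρ b = τ a := by simp [hρ]
  have hb : ρ.SameCycle b (τ a) := hρb ▸ Perm.sameCycle_apply_right.2 (.refl _ _)
  have horbit : ∀ i : ℕ, ρ.SameCycle b ((τ ^ i) (τ a)) := by
    intro i
    induction i with
    | zero => exact hb
    | succ i ih =>
      rw [pow_succ', Perm.mul_apply]
      set y := (τ ^ i) (τ a) with hy
      have hay : τ.SameCycle a y := by simp [hy, Perm.SameCycle.refl]
      by_cases hya : y = a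
      · rwa [hya]
      · have hyb : y ≠ b := fun h => hab (h ▸ hay)
        have hρy : ρ y = τ y := by simp [hρ, swap_apply_of_ne_of_ne hya hyb]
        rwa [← hρy, Perm.sameCycle_apply_right]
  obtain ⟨i, -, hi⟩ := (Perm.sameCycle_apply_left.2 (.refl τ a)).exists_pow_eq'
  exact (hi ▸ horbit i).symm

theorem sameCycle_mul_swap_of_sameCycle [DecidableEq E] {τ : Perm E} {a b x y : E}
    (hab : ¬τ.SameCycle a b) (hxy : τ.SameCycle x y) : (τ * swap a b).SameCycle x y := by
  have hmerge := sameCycle_mul_swap_self hab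
  have hstep : ∀ u, (τ * swap a b).SameCycle u (τ u) := by
    intro u
    by_cases hua : u = a
    · have hb : (τ * swap a b) b = τ u := by simp [hua]
      rw [← hb, Perm.sameCycle_apply_right, hua]
      exact hmerge
    by_cases hub : u = b
    · have ha : (τ * swap a b) a = τ u := by simp [hub]
      rw [← ha, Perm.sameCycle_apply_right, hub]
      exact hmerge.symm
    · have hu : (τ * swap a b) u = τ u := by simp [swap_apply_of_ne_of_ne hua hub]
      rw [← hu, Perm.sameCycle_apply_right]
  obtain ⟨i, -, rfl⟩ := hxy.exists_pow_eq'
  induction i with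
  | zero => exact .refl _ _
  | succ i ih =>
    rw [pow_succ', Perm.mul_apply]
    exact (ih (by simp [Perm.SameCycle.refl])).trans (hstep _)

variable {src tgt : E → V}

-- A successor permutation with the most pairs of edges on a common cycle works, since swapping the
-- successors of two edges with a common target merges their cycles.
theorem exists_perm_sameCycle_of_tgt_eq {σ : Perm E} (hσ : ∀ e, src (σ e) = tgt e) :
    ∃ τ : Perm E, (∀ e, src (τ e) = tgt e) ∧ ∀ e f, tgt e = tgt f → τ.SameCycle e f := by
  classical
  have : Nonempty {τ : Perm E // ∀ e, src (τ e) = tgt e} := ⟨⟨σ, hσ⟩⟩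
  obtain ⟨⟨τ, hτ⟩, hmax⟩ := Finite.exists_max fun τ : {τ : Perm E // ∀ e, src (τ e) = tgt e} =>
    {p : E × E | τ.1.SameCycle p.1 p.2}.ncard
  refine ⟨τ, hτ, fun e f hef => ?_⟩
  by_contra hnot
  have hρ : ∀ x, src ((τ * swap e f) x) = tgt x := by
    intro x
    rw [Perm.mul_apply, hτ, swap_apply_def]
    split_ifs <;> simp_all
  have hssub : {p : E × E | τ.SameCycle p.1 p.2} ⊂
      {p : E × E | (τ * swap e f).SameCycle p.1 p.2} :=
    ⟨fun _ hp => sameCycle_mul_swap_of_sameCycle hnot hp,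
      fun h => hnot (@h (e, f) (sameCycle_mul_swap_self hnot))⟩
  exact (Set.ncard_lt_ncard hssub (Set.toFinite _)).not_ge (hmax ⟨_, hρ⟩)

theorem exists_isCycleOn_univ_of_connected {σ : Perm E} (hσ : ∀ e, src (σ e) = tgt e)
    (hconn : ∀ e f, Relation.EqvGen (fun u v => ∃ e, src e = u ∧ tgt e = v) (src e) (src f)) :
    ∃ τ : Perm E, (∀ e, src (τ e) = tgt e) ∧ τ.IsCycleOn Set.univ := by
  obtain ⟨τ, hτ, htgt⟩ := exists_perm_sameCycle_of_tgt_eq hσ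
  have hsrc : ∀ e f, src e = src f → τ.SameCycle e f := by
    intro e f hef
    have h := htgt (τ⁻¹ e) (τ⁻¹ f) (by rw [← hτ, ← hτ]; simpa using hef)
    simpa using h
  refine ⟨τ, hτ, Set.bijOn_univ.2 τ.bijective, fun e _ f _ => ?_⟩
  have hreach : ∀ {u v}, Relation.EqvGen (fun u v => ∃ e, src e = u ∧ tgt e = v) u v →
      ((∃ g, src g = u ∧ τ.SameCycle e g) ↔ ∃ g, src g = v ∧ τ.SameCycle e g) := by
    intro u v huv
    induction huv with
    | rel u v h =>
      obtain ⟨d, rfl, rfl⟩ := h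
      constructor
      · rintro ⟨g, hg, heg⟩
        exact ⟨τ d, hτ d, Perm.sameCycle_apply_right.2 (heg.trans (hsrc g d hg))⟩
      · rintro ⟨g, hg, heg⟩
        have hgd : τ.SameCycle g (τ d) := hsrc g (τ d) (hg.trans (hτ d).symm)
        exact ⟨d, rfl, Perm.sameCycle_apply_right.1 (heg.trans hgd)⟩
    | refl => rfl
    | symm _ _ _ ih => exact ih.symm
    | trans _ _ _ _ _ ih₁ ih₂ => exact ih₁.trans ih₂
  obtain ⟨g, hg, heg⟩ := (hreach (hconn e f)).1 ⟨e, rfl, .refl _ _⟩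
  exact heg.trans (hsrc g f hg)

theorem exists_zmod_equiv_of_isCycleOn_univ [Nonempty E] {τ : Perm E}
    (hτ : τ.IsCycleOn Set.univ) :
    ∃ b : ZMod (Nat.card E) ≃ E, ∀ (i : ZMod (Nat.card E)) (j : ℕ), b (i + j) = (τ ^ j) (b i) := by
  have := Fintype.ofFinite E
  have : NeZero (Nat.card E) := ⟨Nat.card_pos.ne'⟩
  obtain ⟨e₀⟩ := ‹Nonempty E›
  have hcycle : τ.IsCycleOn ((Finset.univ : Finset E) : Set E) := by simpa using hτ
  have hpow : ∀ i j : ℕ, (τ ^ i) e₀ = (τ ^ j) e₀ ↔ (i : ZMod (Nat.card E)) = j := fun i j => by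
    rw [hcycle.pow_apply_eq_pow_apply (Finset.mem_univ e₀), Finset.card_univ,
      ← Nat.card_eq_fintype_card, ZMod.natCast_eq_natCast_iff]
  have hbij : Function.Bijective fun i : ZMod (Nat.card E) => (τ ^ i.val) e₀ := by
    refine ⟨fun i j hij => by simpa using (hpow _ _).1 hij, fun e => ?_⟩
    obtain ⟨k, -, rfl⟩ := hcycle.exists_pow_eq (Finset.mem_univ e₀) (Finset.mem_univ e)
    exact ⟨k, (hpow _ _).2 (ZMod.natCast_zmod_val _)⟩
  refine ⟨Equiv.ofBijective _ hbij, fun i j => ?_⟩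
  simp only [Equiv.ofBijective_apply]
  rw [← Perm.mul_apply, ← pow_add, hpow]
  simp [add_comm]

end EulerianCircuit

-- In `IsMcycle` the cast to `ZMod` elaborates to a monadic lift of the whole multiset `range t`;
-- here it is applied to the individual indices.
theorem isMcycle_iff {n t : ℕ} {a : ZMod ((n + t - 1).choose t) → Fin n} :
    IsMcycle n t a ↔ ∀ s : Multiset (Fin n), card s = t →
      ∃! i, (range t).map (fun j : ℕ => a (i + j)) = s := by
  simp [IsMcycle]

theorem exists_isMcycle_of_isCycleOn_univ {n t : ℕ} {E : Type*} [Nonempty E] {τ : Perm E}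
    (hτ : τ.IsCycleOn Set.univ) (label : E → Fin n)
    (hwindow : ∀ s : Multiset (Fin n), card s = t →
      ∃! e, (range t).map (fun j => label ((τ ^ j) e)) = s) :
    ∃ a, IsMcycle n t a := by
  let window (e : E) : Sym (Fin n) t := ⟨(range t).map fun j => label ((τ ^ j) e), by simp⟩
  have hbij : Function.Bijective window := by
    refine Function.bijective_iff_existsUnique window |>.2 fun s => ?_
    exact (existsUnique_congr fun _ => Subtype.ext_iff).2 (hwindow s.1 s.2)
  have : Finite E := .of_injective window hbij.1
  have hcard : Nat.card E = (n + t - 1).choose t := by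
    rw [Nat.card_eq_of_bijective window hbij, Nat.card_eq_fintype_card, Sym.card_sym_eq_choose,
      Fintype.card_fin]
  have hparam := exists_zmod_equiv_of_isCycleOn_univ hτ
  rw [hcard] at hparam
  obtain ⟨b, hb⟩ := hparam
  refine ⟨label ∘ b, isMcycle_iff.2 fun s hs => ?_⟩
  simp only [Function.comp_apply, hb]
  exact b.bijective.existsUnique_iff.1 (hwindow s hs)

/-- Among the values `x, y, z, w`, the last one is the largest of those occurring exactly once. -/
def IsLargestUnrepeated (x y z w : ℕ) : Prop :=
  (w ≠ x ∧ w ≠ y ∧ w ≠ z) ∧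
    (x < w ∨ x = y ∨ x = z) ∧ (y < w ∨ y = x ∨ y = z) ∧ (z < w ∨ z = x ∨ z = y)

namespace IsLargestUnrepeated

variable {x y z w : ℕ}

theorem rotate_left (h : IsLargestUnrepeated x y z w) : IsLargestUnrepeated y z x w := by
  unfold IsLargestUnrepeated at *
  omega

theorem not_rotate (h : IsLargestUnrepeated x y z w) : ¬IsLargestUnrepeated y z w x := by
  unfold IsLargestUnrepeated at *
  omega

theorem not_rotate_rotate (h : IsLargestUnrepeated x y z w) : ¬IsLargestUnrepeated z w x y := by
  unfold IsLargestUnrepeated at *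
  omega

end IsLargestUnrepeated

-- If every value were repeated, the four numbers would consist of two equal pairs, and their sum
-- would be even.
theorem exists_isLargestUnrepeated {x y z w : ℕ} (h : Odd (x + y + z + w)) :
    IsLargestUnrepeated x y z w ∨ IsLargestUnrepeated y z w x ∨
      IsLargestUnrepeated z w x y ∨ IsLargestUnrepeated w x y z := by
  rw [Nat.odd_iff] at h
  unfold IsLargestUnrepeated
  omega

theorem zmod_val_add_natCast_of_lt {n : ℕ} {a : ZMod n} {k : ℕ} (h : a.val + k < n) :
    (a + k).val = a.val + k := by
  have hk : (k : ZMod n).val = k := ZMod.val_natCast_of_lt (by omega)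
  rw [ZMod.val_add_of_lt (by omega), hk]

theorem zmod_val_add_natCast_of_le {n : ℕ} [NeZero n] {a : ZMod n} {k : ℕ} (h : n ≤ a.val + k)
    (hk : k ≤ n) : (a + k).val = a.val + k - n := by
  have ha := a.val_lt
  have hcast : a + k = ((a.val + k - n : ℕ) : ZMod n) := by simp [Nat.cast_sub h]
  rw [hcast, ZMod.val_natCast_of_lt (by omega)]

/-- A cyclic reading of four points of `ℤ/n`: a starting point, the gaps `x`, `y`, `z` leading to
the other three points, and the gap `w` closing the circle. Gaps are natural numbers rather than
residues, so that a gap `n` is distinguished from a gap `0`. -/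
@[ext]
structure GapSeq (n : ℕ) where
  start : ZMod n
  x : ℕ
  y : ℕ
  z : ℕ
  w : ℕ
  sum_eq : x + y + z + w = n

namespace GapSeq

variable {n : ℕ}

/-- The multiset of the four points read off by a gap sequence. -/
def points (e : GapSeq n) : Multiset (ZMod n) :=
  {e.start, e.start + e.x, e.start + e.x + e.y, e.start + e.x + e.y + e.z}

theorem start_add_gaps (e : GapSeq n) : e.start + e.x + e.y + e.z + e.w = e.start := by
  have h := congrArg (Nat.cast (R := ZMod n)) e.sum_eq
  push_cast [ZMod.natCast_self] at h
  linear_combination h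

/-- Start the reading one point later. -/
def rotate : Perm (GapSeq n) where
  toFun e := ⟨e.start + e.x, e.y, e.z, e.w, e.x, by have := e.sum_eq; omega⟩
  invFun e := ⟨e.start - e.w, e.w, e.x, e.y, e.z, by have := e.sum_eq; omega⟩
  left_inv e := by simp
  right_inv e := by simp

theorem points_rotate (e : GapSeq n) : (rotate e).points = e.points := by
  have hlast : (rotate e).points =
      {e.start + e.x, e.start + e.x + e.y, e.start + e.x + e.y + e.z, e.start} := by
    simp [points, rotate, start_add_gaps]
  rw [hlast, points]
  simp only [Multiset.insert_eq_cons, ← Multiset.singleton_add]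
  abel

theorem rotate_pow_four : (rotate : Perm (GapSeq n)) ^ 4 = 1 := by
  ext1 e
  simp [pow_succ, rotate, start_add_gaps]

theorem exists_pow_rotate_eq_of_sameCycle {e f : GapSeq n} (h : rotate.SameCycle e f) :
    ∃ k < 4, (rotate ^ k) e = f := by
  obtain ⟨i, rfl⟩ := h
  refine ⟨(i % 4).toNat, by omega, ?_⟩
  rw [← zpow_natCast, Int.toNat_of_nonneg (by omega), zpow_eq_zpow_emod' i rotate_pow_four]
  rfl

theorem points_eq_of_sameCycle {e f : GapSeq n} (h : rotate.SameCycle e f) :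
    e.points = f.points := by
  obtain ⟨k, -, rfl⟩ := exists_pow_rotate_eq_of_sameCycle h
  clear h
  induction k with
  | zero => rfl
  | succ k ih => rw [pow_succ', Perm.mul_apply, points_rotate, ih]

section Sorted

/-- The reading lists the points in increasing order of their representatives in `[0, n)`, that is,
only the closing gap passes through `0`. -/
def IsSorted (e : GapSeq n) : Prop :=
  e.start.val < e.w

theorem exists_sameCycle_isSorted [NeZero n] (e : GapSeq n) :
    ∃ f, rotate.SameCycle e f ∧ f.IsSorted := by
  -- If a gap passes through `0`, rotating it into the last place gives a sorted reading.
  have hpass : ∀ f : GapSeq n, n ≤ f.start.val + f.x → (rotate f).IsSorted := by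
    intro f hf
    have hsum := f.sum_eq
    have hlt := f.start.val_lt
    change (f.start + f.x).val < f.x
    rw [zmod_val_add_natCast_of_le hf (by omega)]
    omega
  have hsum := e.sum_eq
  by_cases hx : n ≤ e.start.val + e.x
  · exact ⟨rotate e, by simp [Perm.SameCycle.refl], hpass _ hx⟩
  have vx := zmod_val_add_natCast_of_lt (not_le.1 hx)
  by_cases hy : n ≤ e.start.val + e.x + e.y
  · exact ⟨rotate (rotate e), by simp [Perm.SameCycle.refl], hpass _ (by simpa [rotate, vx])⟩
  rw [← vx] at hy
  have vy := zmod_val_add_natCast_of_lt (not_le.1 hy)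
  by_cases hz : n ≤ e.start.val + e.x + e.y + e.z
  · exact ⟨rotate (rotate (rotate e)), by simp [Perm.SameCycle.refl],
      hpass _ (by simpa [rotate, vx, vy])⟩
  · exact ⟨e, .refl _ _, by unfold IsSorted; omega⟩

theorem IsSorted.map_val_points {e : GapSeq n} (he : e.IsSorted) :
    e.points.map ZMod.val = ([e.start.val, e.start.val + e.x, e.start.val + e.x + e.y,
      e.start.val + e.x + e.y + e.z] : List ℕ) := by
  unfold IsSorted at he
  have hsum := e.sum_eq
  have vx : (e.start + e.x).val = e.start.val + e.x := zmod_val_add_natCast_of_lt (by omega)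
  have vy : (e.start + e.x + e.y).val = e.start.val + e.x + e.y := by
    rw [zmod_val_add_natCast_of_lt (by omega), vx]
  have vz : (e.start + e.x + e.y + e.z).val = e.start.val + e.x + e.y + e.z := by
    rw [zmod_val_add_natCast_of_lt (by omega), vy]
  simp only [points, insert_eq_cons, map_cons, map_singleton, vx, vy, vz]
  rfl

theorem IsSorted.eq_of_points_eq [NeZero n] {e f : GapSeq n} (he : e.IsSorted) (hf : f.IsSorted)
    (h : e.points = f.points) : e = f := by
  have hperm := congrArg (Multiset.map ZMod.val) h
  rw [he.map_val_points, hf.map_val_points, coe_eq_coe] at hperm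
  have hlist := hperm.eq_of_pairwise' (r := (· ≤ ·)) (by simp; omega) (by simp; omega)
  simp only [List.cons.injEq, and_true] at hlist
  have hsume := e.sum_eq
  have hsumf := f.sum_eq
  ext <;> first | exact ZMod.val_injective n hlist.1 | omega

theorem sameCycle_of_points_eq [NeZero n] {e f : GapSeq n} (h : e.points = f.points) :
    rotate.SameCycle e f := by
  obtain ⟨e', hee', he'⟩ := exists_sameCycle_isSorted e
  obtain ⟨f', hff', hf'⟩ := exists_sameCycle_isSorted f
  have hpoints : e'.points = f'.points := by
    rw [← points_eq_of_sameCycle hee', h, points_eq_of_sameCycle hff']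
  exact hee'.trans (he'.eq_of_points_eq hf' hpoints ▸ hff'.symm)

theorem exists_points_eq [NeZero n] {s : Multiset (ZMod n)} (hs : card s = 4) :
    ∃ e : GapSeq n, e.points = s := by
  obtain ⟨p, q, r, t, hl⟩ : ∃ p q r t, (s.map ZMod.val).sort (· ≤ ·) = [p, q, r, t] :=
    List.length_eq_four.1 (by simp [hs])
  have hval : s.map ZMod.val = ([p, q, r, t] : List ℕ) := by rw [← hl, sort_eq]
  have hsorted : [p, q, r, t].Pairwise (· ≤ ·) := hl ▸ pairwise_sort _ (· ≤ ·)
  have ht : t < n := by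
    have hmem : t ∈ s.map ZMod.val := by simp [hval]
    obtain ⟨c, -, rfl⟩ := mem_map.1 hmem
    exact c.val_lt
  have hcast : s = (([p, q, r, t] : List ℕ) : Multiset ℕ).map (Nat.cast (R := ZMod n)) := by
    simp [← hval]
  simp only [List.pairwise_cons, List.mem_cons] at hsorted
  have hpq : p ≤ q := by simp_all
  have hqr : q ≤ r := by simp_all
  have hrt : r ≤ t := by simp_all
  refine ⟨⟨p, q - p, r - q, t - r, n + p - t, by omega⟩, ?_⟩
  rw [hcast]
  simp [points, Nat.cast_sub, hpq, hqr, hrt]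
  rfl

end Sorted

/-- The condition selecting one reading of each multiset of four points. -/
def IsMarked (e : GapSeq n) : Prop :=
  IsLargestUnrepeated e.x e.y e.z e.w

theorem exists_sameCycle_isMarked (hn : Odd n) (e : GapSeq n) :
    ∃ f, rotate.SameCycle e f ∧ f.IsMarked := by
  rcases exists_isLargestUnrepeated (e.sum_eq ▸ hn) with h | h | h | h
  · exact ⟨e, .refl _ _, h⟩
  · exact ⟨rotate e, by simp [Perm.SameCycle.refl], h⟩
  · exact ⟨rotate (rotate e), by simp [Perm.SameCycle.refl], h⟩
  · exact ⟨rotate (rotate (rotate e)), by simp [Perm.SameCycle.refl], h⟩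

theorem IsMarked.eq_of_sameCycle {e f : GapSeq n} (he : e.IsMarked) (hf : f.IsMarked)
    (h : rotate.SameCycle e f) : e = f := by
  obtain ⟨k, hk, rfl⟩ := exists_pow_rotate_eq_of_sameCycle h
  interval_cases k
  · rfl
  · exact (he.not_rotate hf).elim
  · exact (he.not_rotate_rotate hf).elim
  · exact (hf.not_rotate he).elim

end GapSeq

/-- The gap sequences satisfying the marking condition, which form the edges of the transition
graph. -/
def MarkedGapSeq (n : ℕ) : Type :=
  {e : GapSeq n // e.IsMarked}

namespace MarkedGapSeq

variable {n : ℕ}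

theorem existsUnique_points_eq [NeZero n] (hn : Odd n) {s : Multiset (ZMod n)} (hs : card s = 4) :
    ∃! e : MarkedGapSeq n, e.1.points = s := by
  obtain ⟨e, rfl⟩ := GapSeq.exists_points_eq hs
  obtain ⟨f, hef, hf⟩ := e.exists_sameCycle_isMarked hn
  refine ⟨⟨f, hf⟩, (GapSeq.points_eq_of_sameCycle hef).symm, fun g hg => Subtype.ext ?_⟩
  exact g.2.eq_of_sameCycle hf ((GapSeq.sameCycle_of_points_eq hg).trans hef)

theorem finite [NeZero n] (hn : Odd n) : Finite (MarkedGapSeq n) := by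
  let window (e : MarkedGapSeq n) : Sym (ZMod n) 4 := ⟨e.1.points, by simp [GapSeq.points]⟩
  refine .of_injective window fun e f hef => ?_
  exact (existsUnique_points_eq hn (window f).2).unique (congrArg Subtype.val hef) rfl

/-- The tail of an edge of the transition graph: the first three points of the window, encoded as
a starting point and two gaps. -/
def src (e : MarkedGapSeq n) : ZMod n × ℕ × ℕ :=
  (e.1.start, e.1.x, e.1.y)

/-- The head of an edge of the transition graph: the last three points of the window, encoded as
a starting point and two gaps. -/
def tgt (e : MarkedGapSeq n) : ZMod n × ℕ × ℕ :=
  (e.1.start + e.1.x, e.1.y, e.1.z)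

/-- A permutation of the edges sending each edge to one that can follow it, witnessing that the
transition graph is balanced. -/
def turn : Perm (MarkedGapSeq n) where
  toFun e := ⟨⟨e.1.start + e.1.x, e.1.y, e.1.z, e.1.x, e.1.w, by have := e.1.sum_eq; omega⟩,
    e.2.rotate_left⟩
  invFun e := ⟨⟨e.1.start - e.1.z, e.1.z, e.1.x, e.1.y, e.1.w, by have := e.1.sum_eq; omega⟩,
    e.2.rotate_left.rotate_left⟩
  left_inv e := Subtype.ext (GapSeq.ext (by simp) rfl rfl rfl rfl)
  right_inv e := Subtype.ext (GapSeq.ext (by simp) rfl rfl rfl rfl)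

theorem map_start_pow_eq_points {τ : Perm (MarkedGapSeq n)} (hτ : ∀ e, src (τ e) = tgt e)
    (e : MarkedGapSeq n) : (range 4).map (fun j => ((τ ^ j) e).1.start) = e.1.points := by
  simp only [src, tgt, Prod.mk.injEq] at hτ
  have hrange : range 4 = {0, 1, 2, 3} := rfl
  rw [hrange]
  simp [GapSeq.points, pow_succ', hτ]

/-- Vertices in the same weakly connected component of the transition graph. -/
def Linked : ZMod n × ℕ × ℕ → ZMod n × ℕ × ℕ → Prop :=
  Relation.EqvGen fun u v => ∃ e : MarkedGapSeq n, src e = u ∧ tgt e = v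

theorem Linked.of_isLargestUnrepeated (a : ZMod n) {x y z w : ℕ} (hsum : x + y + z + w = n)
    (h : IsLargestUnrepeated x y z w) : Linked (a, x, y) (a + x, y, z) :=
  .rel _ _ ⟨⟨⟨a, x, y, z, w, hsum⟩, h⟩, rfl, rfl⟩

theorem linked_natCast_zero_zero (hn : 3 ≤ n) (k : ℕ) : Linked (n := n) (0, 0, 0) (k, 0, 0) := by
  induction k with
  | zero => rw [Nat.cast_zero]; exact .refl _
  | succ k ih =>
    have h : IsLargestUnrepeated 0 0 1 (n - 1) := by unfold IsLargestUnrepeated; omega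
    have h₁ : Linked (n := n) (k, 0, 0) (k, 0, 1) := by
      simpa using Linked.of_isLargestUnrepeated (k : ZMod n) (by omega) h
    have h₂ : Linked (n := n) (k, 0, 1) (k, 1, 0) := by
      simpa using Linked.of_isLargestUnrepeated (k : ZMod n) (by omega) h.rotate_left
    have h₃ : Linked (n := n) (k, 1, 0) ((k + 1 : ℕ), 0, 0) := by
      simpa using Linked.of_isLargestUnrepeated (k : ZMod n) (by omega) h.rotate_left.rotate_left
    exact ih.trans _ _ _ (h₁.trans _ _ _ (h₂.trans _ _ _ h₃))

theorem linked_of_two_mul_add_lt (hn : 3 ≤ n) (a : ZMod n) {x y : ℕ} (hx : 2 * x + y < n)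
    (hy : x + 2 * y < n) : Linked (0, 0, 0) (a, x, y) := by
  have : NeZero n := ⟨by omega⟩
  have h₀ : Linked (0, 0, 0) (a, 0, 0) := by simpa using linked_natCast_zero_zero hn a.val
  have h₁ : Linked (a, 0, 0) (a, 0, x) := by
    simpa using Linked.of_isLargestUnrepeated a (x := 0) (y := 0) (z := x) (w := n - x) (by omega)
      (by unfold IsLargestUnrepeated; omega)
  have h₂ : Linked (a, 0, x) (a, x, y) := by
    simpa using Linked.of_isLargestUnrepeated a (x := 0) (y := x) (z := y) (w := n - x - y)
      (by omega) (by unfold IsLargestUnrepeated; omega)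
  exact h₀.trans _ _ _ (h₁.trans _ _ _ h₂)

-- Cyclic shifts of `(x, y, z)` link `(a, x, y)` to a vertex with any cyclically consecutive pair of
-- these gaps; some such pair is small unless `x = y = z = n / 3`, where the edge with gaps
-- `x, x, 1, x - 1` helps instead.
theorem linked_src (hn : 5 ≤ n) (hodd : Odd n) (e : MarkedGapSeq n) :
    Linked (0, 0, 0) (src e) := by
  obtain ⟨⟨a, x, y, z, w, hsum⟩, h⟩ := e
  change IsLargestUnrepeated x y z w at h
  change Linked (0, 0, 0) (a, x, y)
  have hxy := Linked.of_isLargestUnrepeated a hsum h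
  have hyz := Linked.of_isLargestUnrepeated (a + (x : ZMod n)) (by omega) h.rotate_left
  have hcases : (2 * x + y < n ∧ x + 2 * y < n) ∨ (2 * y + z < n ∧ y + 2 * z < n) ∨
      (2 * z + x < n ∧ z + 2 * x < n) ∨ (x = y ∧ y = z ∧ 3 * x = n) := by
    unfold IsLargestUnrepeated at h
    omega
  rcases hcases with ⟨h₁, h₂⟩ | ⟨h₁, h₂⟩ | ⟨h₁, h₂⟩ | ⟨rfl, rfl, hx⟩
  · exact linked_of_two_mul_add_lt (by omega) a h₁ h₂
  · exact (linked_of_two_mul_add_lt (by omega) _ h₁ h₂).trans _ _ _ (hxy.symm _ _)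
  · exact (linked_of_two_mul_add_lt (by omega) _ h₁ h₂).trans _ _ _
      ((hxy.trans _ _ _ hyz).symm _ _)
  · rw [Nat.odd_iff] at hodd
    have hone := Linked.of_isLargestUnrepeated a (x := x) (y := x) (z := 1) (w := x - 1)
      (by omega) (by unfold IsLargestUnrepeated; omega)
    have hsrc : Linked (0, 0, 0) (a + (x : ZMod n), x, 1) :=
      linked_of_two_mul_add_lt (by omega) _ (by omega) (by omega)
    exact hsrc.trans _ _ _ (hone.symm _ _)

theorem exists_eulerian_perm (hn : 5 ≤ n) (hodd : Odd n) :
    ∃ τ : Perm (MarkedGapSeq n), (∀ e, src (τ e) = tgt e) ∧ τ.IsCycleOn Set.univ := by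
  have : NeZero n := ⟨by omega⟩
  have := finite hodd
  exact exists_isCycleOn_univ_of_connected (σ := turn) (fun _ => rfl)
    fun e f => ((linked_src hn hodd e).symm _ _).trans _ _ _ (linked_src hn hodd f)

end MarkedGapSeq

theorem four_mcycle_exists (n : ℕ) (hn : 5 ≤ n) (h4 : Nat.gcd n 4 = 1) :
    ∃ a : ZMod ((n + 4 - 1).choose 4) → Fin n, IsMcycle n 4 a := by
  have hodd : Odd n := Nat.coprime_two_right.1 (Nat.Coprime.coprime_dvd_right (by norm_num) h4)
  obtain ⟨k, rfl⟩ : ∃ k, n = k + 1 := ⟨n - 1, by omega⟩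
  obtain ⟨τ, hτ, hcycle⟩ := MarkedGapSeq.exists_eulerian_perm hn hodd
  have : Nonempty (MarkedGapSeq (k + 1)) :=
    (MarkedGapSeq.existsUnique_points_eq hodd (card_replicate 4 0)).exists.nonempty
  -- `ZMod (k + 1)` is by definition `Fin (k + 1)`.
  refine exists_isMcycle_of_isCycleOn_univ hcycle (fun e => e.1.start) fun s hs => ?_
  refine (existsUnique_congr fun e => ?_).1 (MarkedGapSeq.existsUnique_points_eq hodd hs)
  exact (MarkedGapSeq.map_start_pow_eq_points hτ e).symm ▸ Iff.rfl
end

section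
/- Let X be a 3-Ucycle of [n]. Then the number of unordered pairs of distinct elements of [n] that are missing from X is at most n/2. -/
/-- A `t`-Ucycle of `[n]`: a cyclic sequence of length `k = C(n, t)` of elements of
`[n]` (modeled as `Fin n`) such that every `t`-element subset of `[n]` appears
exactly once among the `k` cyclic windows of length `t`. -/
def IsUcycle (n t : ℕ) (b : ZMod (n.choose t) → Fin n) : Prop :=
  ∀ s : Finset (Fin n), s.card = t →
    ∃! i : ZMod (n.choose t),
      (Multiset.range t).map (fun j => b (i + (j : ZMod (n.choose t)))) = s.val

/-!
In a window `u, v, w` both `{u, v}` and `{v, w}` occur, so the only pair of its letters that can be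
missing is `{u, w}`. Two missing pairs sharing a letter would have a union of three letters, which
is a window with two missing pairs. Missing pairs are therefore pairwise disjoint.
-/

section FinsetCounting

variable {α : Type*}

lemma card_union_eq_three_of_not_disjoint [DecidableEq α] {p q : Finset α} (hp : p.card = 2)
    (hq : q.card = 2) (hne : p ≠ q) (hpq : ¬Disjoint p q) : (p ∪ q).card = 3 := by
  have inter_pos : 0 < (p ∩ q).card :=
    Finset.card_pos.2 (Finset.not_disjoint_iff_nonempty_inter.1 hpq)
  have inter_lt : (p ∩ q).card < 2 := by
    by_contra! hle
    have hp_inter : p ∩ q = p :=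
      Finset.eq_of_subset_of_card_le Finset.inter_subset_left (by omega)
    have hq_inter : p ∩ q = q :=
      Finset.eq_of_subset_of_card_le Finset.inter_subset_right (by omega)
    exact hne (hp_inter.symm.trans hq_inter)
  have card_add : (p ∪ q).card + (p ∩ q).card = p.card + q.card :=
    Finset.card_union_add_card_inter p q
  omega

lemma eq_outer_pair_of_subset_triple [DecidableEq α] {u v w : α} {p : Finset α}
    (hsub : p ⊆ {u, v, w}) (hp : p.card = 2) (huv : p ≠ {u, v}) (hvw : p ≠ {v, w}) :
    p = {u, w} := by
  have hv : v ∉ p := by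
    intro hv
    obtain ⟨x, hxp, hxv⟩ := Finset.exists_mem_ne (by omega : 1 < p.card) v
    have hp_eq : {v, x} = p :=
      Finset.eq_of_subset_of_card_le (Finset.insert_subset hv (Finset.singleton_subset_iff.2 hxp))
        (by rw [hp, Finset.card_pair hxv.symm])
    have hx : x = u ∨ x = w := by simpa [hxv] using hsub hxp
    rcases hx with rfl | rfl
    · exact huv (hp_eq.symm.trans (Finset.pair_comm v x))
    · exact hvw hp_eq.symm
  have hsub_uw : p ⊆ {u, w} := by grind
  exact Finset.eq_of_subset_of_card_le hsub_uw (Finset.card_le_two.trans hp.ge)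

lemma card_mul_le_card_of_pairwiseDisjoint [Fintype α] {M : Finset (Finset α)} {k : ℕ}
    (hdisj : (M : Set (Finset α)).PairwiseDisjoint id) (hk : ∀ p ∈ M, k ≤ p.card) :
    M.card * k ≤ Fintype.card α := by
  classical
  calc
    M.card * k ≤ ∑ p ∈ M, p.card := M.card_nsmul_le_sum _ k hk
    _ = (M.biUnion id).card := (Finset.card_biUnion hdisj).symm
    _ ≤ Fintype.card α := Finset.card_le_univ _

end FinsetCounting

section MissingPairs

variable {ι α : Type*} [Add ι] [One ι] [DecidableEq α] {b : ι → α}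

/-- Every set of three letters is a window of the sequence `b`. This is the existence half of the
universal cycle property; repeated windows and arbitrary index types are allowed. -/
def CoversTriples (b : ι → α) : Prop :=
  ∀ s : Finset α, s.card = 3 → ∃ i, {b i, b (i + 1), b (i + 1 + 1)} = s

/-- A missing pair of the sequence `b`: two letters that are never adjacent in `b`, in either
order. The pair is encoded as a two-element finset. -/
def IsMissingPair (b : ι → α) (p : Finset α) : Prop :=
  p.card = 2 ∧ ∀ i, {b i, b (i + 1)} ≠ p

lemma IsMissingPair.eq_outer_pair {p : Finset α} (hp : IsMissingPair b p) {i : ι}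
    (hsub : p ⊆ {b i, b (i + 1), b (i + 1 + 1)}) : p = {b i, b (i + 1 + 1)} :=
  eq_outer_pair_of_subset_triple hsub hp.1 (hp.2 i).symm (hp.2 (i + 1)).symm

lemma CoversTriples.disjoint_of_isMissingPair (hb : CoversTriples b) {p q : Finset α}
    (hp : IsMissingPair b p) (hq : IsMissingPair b q) (hne : p ≠ q) : Disjoint p q := by
  by_contra hpq
  obtain ⟨i, hi⟩ := hb (p ∪ q) (card_union_eq_three_of_not_disjoint hp.1 hq.1 hne hpq)
  have hp_outer := hp.eq_outer_pair (i := i) (hi ▸ Finset.subset_union_left)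
  have hq_outer := hq.eq_outer_pair (i := i) (hi ▸ Finset.subset_union_right)
  exact hne (hp_outer.trans hq_outer.symm)

theorem missing_pairs_le_general [Finite α] (hb : CoversTriples b) :
    Nat.card {p : Finset α // IsMissingPair b p} ≤ Nat.card α / 2 := by
  classical
  have := Fintype.ofFinite α
  rw [Nat.card_eq_fintype_card, Nat.card_eq_fintype_card, Fintype.card_subtype,
    Nat.le_div_iff_mul_le two_pos]
  refine card_mul_le_card_of_pairwiseDisjoint (fun p hp q hq hne ↦ ?_) fun p hp ↦ ?_
  · exact hb.disjoint_of_isMissingPair (Finset.mem_filter_univ p |>.1 hp)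
      (Finset.mem_filter_univ q |>.1 hq) hne
  · exact (Finset.mem_filter_univ p |>.1 hp).1.ge

end MissingPairs

lemma IsUcycle.coversTriples {n : ℕ} {b : ZMod (n.choose 3) → Fin n} (h : IsUcycle n 3 b) :
    CoversTriples b := by
  intro s hs
  obtain ⟨i, hi, -⟩ := h s hs
  refine ⟨i, ?_⟩
  have two_shift : i + 1 + 1 = i + 2 := by rw [add_assoc, one_add_one_eq_two]
  have range_three : Multiset.range 3 = {0, 1, 2} := rfl
  rw [two_shift, ← s.val_toFinset, ← hi, range_three]
  ext z
  -- In `IsUcycle` the cast of `Multiset.range` to `ZMod` elaborates to a monadic bind.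
  simp [Multiset.bind_def, Multiset.pure_def]

/-- A 3-Ucycle of `[n]` is missing at most `n / 2` unordered pairs of letters. -/
theorem missing_pairs_le (n : ℕ) (hn : 0 < n) (b : ZMod (n.choose 3) → Fin n)
    (h : IsUcycle n 3 b) :
    Nat.card {p : Finset (Fin n) // p.card = 2 ∧
      ∀ i : ZMod (n.choose 3), ({b i, b (i + 1)} : Finset (Fin n)) ≠ p} ≤ n / 2 :=
  (missing_pairs_le_general h.coversTriples).trans_eq (by rw [Nat.card_fin])
end

section
/- Let t ∈ {3, 4, 6} and let n be a positive integer with gcd(n, t) = 1. Then every multiset of t nonnegative integers whose sum is n contains an element that occurs in it with multiplicity exactly 1. -/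
/-!
Multiplicities other than `1` that add up to `t`, where `t ≤ 6` and `t ≠ 5`, are all even or all
divisible by `3`: otherwise an odd one and one prime to `3` (possibly the same one) would account
for exactly `5` out of `6`, leaving a remainder of `1`. So a multiset of size `t` without an element
of multiplicity `1` consists of `d` copies of another multiset, with `d = 2` or `d = 3`, and then
`d` divides both its size and its sum.
-/

theorem sum_ne_sum_add_one_of_subset {ι : Type*} {S T : Finset ι} {f : ι → ℕ} (hTS : T ⊆ S)
    (hf : ∀ i ∈ S, f i ≠ 1) : ∑ i ∈ S, f i ≠ ∑ i ∈ T, f i + 1 := by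
  classical
  intro h
  have hrest : ∑ i ∈ S \ T, f i = 1 := by
    have := Finset.sum_sdiff (f := f) hTS
    omega
  obtain ⟨i, hi, hfi⟩ : ∃ i ∈ S \ T, f i ≠ 0 := Finset.exists_ne_zero_of_sum_ne_zero (by omega)
  have := Finset.single_le_sum_of_canonicallyOrdered (f := f) hi
  have := hf i (Finset.mem_sdiff.1 hi).1
  omega

theorem forall_two_dvd_or_forall_three_dvd_of_sum_le_six {ι : Type*} {S : Finset ι} {f : ι → ℕ}
    (hf : ∀ i ∈ S, f i ≠ 1) (hle : ∑ i ∈ S, f i ≤ 6) (hne : ∑ i ∈ S, f i ≠ 5) :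
    (∀ i ∈ S, 2 ∣ f i) ∨ (∀ i ∈ S, 3 ∣ f i) := by
  classical
  by_contra! h
  obtain ⟨⟨i, hi, hi2⟩, j, hj, hj3⟩ := h
  have hsub : {i, j} ⊆ S := by simp [Finset.insert_subset_iff, hi, hj]
  have hpair_le : ∑ k ∈ {i, j}, f k ≤ ∑ k ∈ S, f k := Finset.sum_le_sum_of_subset hsub
  have hpair : ∑ k ∈ {i, j}, f k = 5 := by
    have := hf i hi
    have := hf j hj
    by_cases hij : i = j
    · subst hij
      rw [Finset.pair_eq_singleton, Finset.sum_singleton] at hpair_le ⊢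
      omega
    · rw [Finset.sum_pair hij] at hpair_le ⊢
      have : f i = 3 ∨ f i = 5 := by omega
      omega
  exact sum_ne_sum_add_one_of_subset hsub hf (by omega)

theorem exists_eq_two_nsmul_or_three_nsmul_of_count_ne_one {α : Type*} [DecidableEq α]
    {s : Multiset α} (hs : ∀ x ∈ s, s.count x ≠ 1) (hle : s.card ≤ 6) (hne : s.card ≠ 5) :
    ∃ u : Multiset α, s = 2 • u ∨ s = 3 • u := by
  rw [← Multiset.toFinset_sum_count_eq] at hle hne
  rcases forall_two_dvd_or_forall_three_dvd_of_sum_le_six (by simpa using hs) hle hne with h | h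
  · obtain ⟨u, hu⟩ := Multiset.exists_smul_of_dvd_count s (by simpa using h)
    exact ⟨u, .inl hu⟩
  · obtain ⟨u, hu⟩ := Multiset.exists_smul_of_dvd_count s (by simpa using h)
    exact ⟨u, .inr hu⟩

theorem isUnit_natCast_of_isRelPrime_sum_card_nsmul {R : Type*} [Semiring R] {d : ℕ}
    {u : Multiset R} (h : IsRelPrime (d • u).sum ((d • u).card : R)) : IsUnit (d : R) := by
  apply h
  · rw [Multiset.sum_nsmul, nsmul_eq_mul]
    exact dvd_mul_right _ _
  · rw [Multiset.card_nsmul, Nat.cast_mul]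
    exact dvd_mul_right _ _

theorem good_pattern_of_gcd_one_general {R : Type*} [Semiring R] [DecidableEq R]
    (h2 : ¬IsUnit (2 : R)) (h3 : ¬IsUnit (3 : R)) {s : Multiset R} (hle : s.card ≤ 6)
    (hne : s.card ≠ 5) (hs : IsRelPrime s.sum (s.card : R)) : ∃ x ∈ s, s.count x = 1 := by
  by_contra! hcount
  obtain ⟨u, rfl | rfl⟩ := exists_eq_two_nsmul_or_three_nsmul_of_count_ne_one hcount hle hne
  · exact h2 (mod_cast isUnit_natCast_of_isRelPrime_sum_card_nsmul hs)
  · exact h3 (mod_cast isUnit_natCast_of_isRelPrime_sum_card_nsmul hs)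

/-- For `t ∈ {3, 4, 6}` and `gcd(n, t) = 1`, every multiset of `t` nonnegative
integers summing to `n` has an element of multiplicity exactly 1 (i.e. every
class of forms has a good pattern). -/
theorem good_pattern_of_gcd_one (t n : ℕ) (ht : t = 3 ∨ t = 4 ∨ t = 6)
    (hn : 0 < n) (hgcd : Nat.gcd n t = 1)
    (s : Multiset ℕ) (hcard : Multiset.card s = t) (hsum : s.sum = n) :
    ∃ x ∈ s, s.count x = 1 := by
  subst hcard hsum
  exact good_pattern_of_gcd_one_general (by simp) (by simp) (by omega) (by omega)
    (Nat.coprime_iff_isRelPrime.1 hgcd)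
end

section
/- For every positive integer n, if a 2-Ucycle of [n] exists, then a 2-Mcycle of [n] exists. -/
/-! Record a cyclic sequence by the multiset of its unordered pairs of neighbours. Repeating one
entry `x` in place adds the pair `s(x, x)` to this multiset and changes nothing else. The pairs of a
`2`-Ucycle are exactly the off-diagonal ones, so repeating one occurrence of each letter yields
every unordered pair exactly once, which is a `2`-Mcycle. -/

open Finset

variable {α : Type*} {n k : ℕ}

section CyclicPairs

variable [NeZero k]

/-- The windows of length two of the cyclic sequence `a`, counted with multiplicity. A window is
encoded as an element of `Sym2 α`, so that covering every window exactly once means that this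
multiset is that of all elements of `Sym2 α`. -/
def cyclicPairs (a : ZMod k → α) : Multiset (Sym2 α) :=
  (univ : Finset (ZMod k)).val.map fun i => s(a i, a (i + 1))

lemma card_cyclicPairs (a : ZMod k → α) : (cyclicPairs a).card = k := by
  simp [cyclicPairs, ZMod.card]

lemma mk_mem_cyclicPairs (a : ZMod k → α) (i : ZMod k) : s(a i, a (i + 1)) ∈ cyclicPairs a :=
  Multiset.mem_map_of_mem _ (mem_univ i)

lemma mem_range_iff_exists_mem_cyclicPairs {a : ZMod k → α} {x : α} :
    x ∈ Set.range a ↔ ∃ z ∈ cyclicPairs a, x ∈ z := by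
  constructor
  · rintro ⟨i, rfl⟩
    exact ⟨_, mk_mem_cyclicPairs a i, Sym2.mem_mk_left _ _⟩
  · rintro ⟨z, hz, hx⟩
    obtain ⟨i, -, rfl⟩ := Multiset.mem_map.mp hz
    rcases Sym2.mem_iff.mp hx with rfl | rfl
    exacts [⟨i, rfl⟩, ⟨i + 1, rfl⟩]

lemma cyclicPairs_comp_add_right (a : ZMod k → α) (c : ZMod k) :
    cyclicPairs (fun i => a (i + c)) = cyclicPairs a := by
  conv_rhs => rw [cyclicPairs, ← Multiset.map_univ_val_equiv (Equiv.addRight c), Multiset.map_map]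
  simp [cyclicPairs, add_right_comm]

end CyclicPairs

-- `ZMod (k + 1)` unfolds to `Fin (k + 1)`, where only `Fin.last k + 1 = 0` wraps around.
lemma cyclicPairs_eq_cons_map_castSucc_succ (a : Fin (k + 1) → α) :
    cyclicPairs (k := k + 1) a =
      s(a (Fin.last k), a 0) ::ₘ
        (univ : Finset (Fin k)).val.map fun i => s(a i.castSucc, a i.succ) := by
  change (univ : Finset (Fin (k + 1))).val.map (fun i => s(a i, a (i + 1))) = _
  rw [Fin.univ_castSuccEmb]
  simp [Function.comp_def, Fin.coeSucc_eq_succ]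

lemma cyclicPairs_cons_head (a : Fin (k + 1) → α) :
    cyclicPairs (k := k + 2) (Fin.cons (a 0) a : Fin (k + 2) → α) =
      Sym2.diag (a 0) ::ₘ cyclicPairs (k := k + 1) a := by
  rw [cyclicPairs_eq_cons_map_castSucc_succ, cyclicPairs_eq_cons_map_castSucc_succ, Fin.univ_succ,
    Multiset.cons_swap]
  simp [Function.comp_def, ← Fin.succ_last, Sym2.diag]

lemma exists_cyclicPairs_eq_diag_cons [NeZero k] (a : ZMod k → α) {x : α} (hx : x ∈ Set.range a) :
    ∃ a' : ZMod (k + 1) → α, cyclicPairs a' = Sym2.diag x ::ₘ cyclicPairs a := by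
  obtain ⟨p, rfl⟩ := hx
  obtain ⟨k, rfl⟩ := Nat.exists_eq_succ_of_ne_zero (NeZero.ne k)
  refine ⟨_, (cyclicPairs_cons_head fun i : ZMod (k + 1) => a (i + p)).trans ?_⟩
  congr 1
  · exact congrArg (fun i => Sym2.diag (a i)) (zero_add p)
  · exact cyclicPairs_comp_add_right a p

lemma exists_cyclicPairs_eq_map_diag_add [NeZero k] (a : ZMod k → α) (T : Multiset α)
    (hT : ∀ x ∈ T, x ∈ Set.range a) :
    ∃ (m : ℕ) (_ : NeZero m) (a' : ZMod m → α),
      cyclicPairs a' = T.map Sym2.diag + cyclicPairs a := by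
  induction T using Multiset.induction_on with
  | empty => exact ⟨k, ‹_›, a, by simp⟩
  | cons x T ih =>
    obtain ⟨m, _, a', ha'⟩ := ih fun y hy => hT y (Multiset.mem_cons_of_mem hy)
    have hx : x ∈ Set.range a' := by
      obtain ⟨z, hz, hxz⟩ :=
        mem_range_iff_exists_mem_cyclicPairs.mp (hT x (Multiset.mem_cons_self x T))
      exact mem_range_iff_exists_mem_cyclicPairs.mpr
        ⟨z, ha' ▸ Multiset.mem_add.mpr (Or.inr hz), hxz⟩
    obtain ⟨a'', ha''⟩ := exists_cyclicPairs_eq_diag_cons a' hx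
    exact ⟨m + 1, inferInstance, a'', by rw [ha'', ha', Multiset.map_cons, Multiset.cons_add]⟩

lemma map_diag_univ_add_filter_not_isDiag [Fintype α] [DecidableEq α] :
    (univ : Finset α).val.map Sym2.diag + ({z | ¬z.IsDiag} : Finset (Sym2 α)).val =
      (univ : Finset (Sym2 α)).val := by
  have hdiag : (univ : Finset α).val.map Sym2.diag = ({z | z.IsDiag} : Finset (Sym2 α)).val := by
    have hmap : ({z | z.IsDiag} : Finset (Sym2 α)) = univ.map ⟨Sym2.diag, Sym2.diag_injective⟩ := by
      ext z
      induction z with | _ x y => simp [Sym2.diag, eq_comm]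
    rw [hmap, map_val]
    rfl
  rw [hdiag, filter_val, filter_val, Multiset.filter_add_not]

lemma map_range_two_eq_equivMultiset (a : ZMod k → α) (i : ZMod k) :
    (Multiset.range 2).map (fun j => a (i + (j : ZMod k))) =
      (Sym2.equivMultiset α s(a i, a (i + 1)) : Multiset α) := by
  have hpair : (Sym2.equivMultiset α s(a i, a (i + 1)) : Multiset α) = {a i, a (i + 1)} := rfl
  rw [hpair, Multiset.pair_comm]
  simp [Multiset.range_succ]

lemma IsUcycle.cyclicPairs_eq_filter_not_isDiag [NeZero (n.choose 2)]
    {b : ZMod (n.choose 2) → Fin n} (hb : IsUcycle n 2 b) :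
    cyclicPairs b = ({z | ¬z.IsDiag} : Finset (Sym2 (Fin n))).val := by
  have hcard : #({z | ¬z.IsDiag} : Finset (Sym2 (Fin n))) = n.choose 2 := by
    rw [← Fintype.card_subtype, Sym2.card_subtype_not_diag, Fintype.card_fin]
  refine (Multiset.eq_of_le_of_card_le ?_ (by rw [card_cyclicPairs, card_val, hcard])).symm
  refine (Multiset.le_iff_subset (nodup _)).mpr fun z hz => ?_
  induction z with | _ x y =>
  have hxy : x ≠ y := by simpa using hz
  obtain ⟨i, hi, -⟩ := hb {x, y} (card_pair hxy)
  have hval : ({x, y} : Finset (Fin n)).val = Sym2.equivMultiset (Fin n) s(x, y) :=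
    insert_val_of_notMem (by simpa using hxy)
  rw [map_range_two_eq_equivMultiset, hval, Subtype.val_inj, EmbeddingLike.apply_eq_iff_eq] at hi
  exact hi ▸ mk_mem_cyclicPairs b i

lemma IsUcycle.surjective [NeZero (n.choose 2)] {b : ZMod (n.choose 2) → Fin n}
    (hb : IsUcycle n 2 b) : Function.Surjective b := fun x => by
  have : Nontrivial (Fin n) :=
    Fin.nontrivial_iff_two_le.mpr (Nat.choose_ne_zero_iff.mp (NeZero.ne (n.choose 2)))
  obtain ⟨y, hyx⟩ := exists_ne x
  refine mem_range_iff_exists_mem_cyclicPairs.mpr ⟨s(x, y), ?_, Sym2.mem_mk_left x y⟩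
  simpa [hb.cyclicPairs_eq_filter_not_isDiag] using hyx.symm

lemma isMcycle_two_iff_cyclicPairs_eq_univ [NeZero ((n + 2 - 1).choose 2)]
    {a : ZMod ((n + 2 - 1).choose 2) → Fin n} :
    IsMcycle n 2 a ↔ cyclicPairs a = (univ : Finset (Sym2 (Fin n))).val := by
  rw [cyclicPairs, ← Multiset.bijective_iff_map_univ_eq_univ, Function.bijective_iff_existsUnique,
    (Sym2.equivMultiset (Fin n)).forall_congr_left, Subtype.forall]
  simp only [IsMcycle, map_range_two_eq_equivMultiset, Equiv.eq_symm_apply, Subtype.ext_iff]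

lemma exists_isMcycle_two_of_cyclicPairs_eq_univ [NeZero k] (a : ZMod k → Fin n)
    (ha : cyclicPairs a = (univ : Finset (Sym2 (Fin n))).val) :
    ∃ a' : ZMod ((n + 2 - 1).choose 2) → Fin n, IsMcycle n 2 a' := by
  obtain rfl : k = (n + 2 - 1).choose 2 := by
    rw [← card_cyclicPairs a, ha, card_val, card_univ, Sym2.card, Fintype.card_fin]
    rfl
  exact ⟨a, isMcycle_two_iff_cyclicPairs_eq_univ.mpr ha⟩

theorem ucycle_to_mcycle_two (n : ℕ) (hn : 0 < n)
    (h : ∃ b : ZMod (n.choose 2) → Fin n, IsUcycle n 2 b) :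
    ∃ a : ZMod ((n + 2 - 1).choose 2) → Fin n, IsMcycle n 2 a := by
  obtain rfl | hn2 : 1 = n ∨ 2 ≤ n := Nat.eq_or_lt_of_le hn
  · exact exists_isMcycle_two_of_cyclicPairs_eq_univ (k := 1) (fun _ => 0) (by decide)
  · obtain ⟨b, hb⟩ := h
    have : NeZero (n.choose 2) := ⟨(Nat.choose_pos hn2).ne'⟩
    obtain ⟨m, _, a, ha⟩ := exists_cyclicPairs_eq_map_diag_add b (univ : Finset (Fin n)).val
      fun x _ => hb.surjective x
    refine exists_isMcycle_two_of_cyclicPairs_eq_univ a ?_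
    rw [ha, hb.cyclicPairs_eq_filter_not_isDiag, map_diag_univ_add_filter_not_isDiag]
end
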